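/- arXiv:1510.05835 — 2 statements merged into one kernel-verified Lean document; each statement's English description precedes it below -/
import Mathlib

section
/- Let r ≥ 2 and q ≥ 1 be integers and α_1,…,α_r ∈ [0,1). Then there exists a function ξ analytic on U_r(q) such that for all (s_1,…,s_r) ∈ U_r: ζ_r(s_1,…,s_r; α_1,…,α_r) = (s_1−1)^{−1} ζ_{r−1}(s_1+s_2−1, s_3,…,s_r; α_2,…,α_r) + ∑_{k=0}^{q−2} [s_1(s_1+1)⋯(s_1+k−1)/(k+1)!] · B_{k+1}(α_2−α_1) · ζ_{r−1}(s_1+s_2+k, s_3,…,s_r; α_2,…,α_r) + ξ(s_1,…,s_r), where the empty product (case k = 0) equals 1 and an empty sum (case q = 1) equals 0. (All multiple Hurwitz zeta values appearing are given by their absolutely convergent series.) -/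
/-!
The largest summation index `n₁` runs through `n₂ + 1, n₂ + 2, …`, so the inner sum is
`∑_{j ≥ 0} (x + j + 1 - η)^{-z}` with `x = n₂ + α₂`, `η = α₂ - α₁ ∈ (-1, 1)` and `z = s₁`. For each
unit step, Euler-Maclaurin of order `N = q - 1` writes `(y + 1 - η)^{-z}` as a difference
`emMain y - emMain (y + 1)` plus an error `emRem` (`rpowC_sub_emRem`). For `Re z > 1` the main
parts telescope to `emMain (n₂ + α₂)`, and its terms, multiplied by the remaining factors, sum
over `n₂ > ⋯ > n_r` to the depth `r - 1` zeta values of the identity (`tsum_emMain`). The sum of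
the errors is `ξ`.

The error is differentiated in `η`: `d/dη` of the error of order `N + 1` at `z` is `z` times the
error of order `N` at `z + 1`, because `B_{k+1}' = (k + 1) B_k`; and the error has mean zero for
`η ∈ [0, 1]`. Hence by induction it is `O((y + 1 - η)^{-Re z - q})`, locally uniformly in `z`, for
all `η ∈ [-1, 1]` (`norm_emRem_le`, `exists_norm_emRem_le`). As `y + 1 - η = n₁ + α₁`, the series
for `ξ` near a point of `U_r(q)` is dominated by an absolutely convergent Hurwitz series whose
first exponent is larger by `q` (`xiTerm_dominated`, with `summable_hzTerm` for convergence on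
`U_r`). So `ξ` is continuous and holomorphic in each variable, hence analytic by Osgood's lemma
(`osgood`), which follows from Cauchy's formula on a polydisc.
-/

open Complex

/-- `e(a) = e^{2πia}`. -/
noncomputable def eR (a : ℝ) : ℂ := Complex.exp (2 * Real.pi * Complex.I * a)

/-- For a real `b > 0` and `z ∈ ℂ`, `b^z := exp (z log b)` (real logarithm). -/
noncomputable def rpowC (b : ℝ) (z : ℂ) : ℂ := Complex.exp (z * Real.log b)

/-- Strictly decreasing tuples of positive integers `n_1 > n_2 > ⋯ > n_r > 0`. -/
def DTuple (r : ℕ) : Type := {n : Fin r → ℕ // StrictAnti n ∧ ∀ i, 0 < n i}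

/-- The term `e(λ_1 n_1)⋯e(λ_r n_r) / ((n_1+α_1)^{s_1}⋯(n_r+α_r)^{s_r})`. -/
noncomputable def lerchTerm {r : ℕ} (lam al : Fin r → ℝ) (s : Fin r → ℂ)
    (n : Fin r → ℕ) : ℂ :=
  (∏ i, eR (lam i * n i)) / ∏ i, rpowC ((n i : ℝ) + al i) (s i)

/-- The multiple Lerch zeta function (as a sum over strictly decreasing tuples). -/
noncomputable def multipleLerch {r : ℕ} (lam al : Fin r → ℝ) (s : Fin r → ℂ) : ℂ :=
  ∑' n : DTuple r, lerchTerm lam al s n.1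

/-- The term `(n_1+α_1)^{-s_1}⋯(n_r+α_r)^{-s_r}`. -/
noncomputable def hzTerm {r : ℕ} (al : Fin r → ℝ) (s : Fin r → ℂ) (n : Fin r → ℕ) : ℂ :=
  ∏ i, rpowC ((n i : ℝ) + al i) (-(s i))

/-- The multiple Hurwitz zeta function (as a sum over strictly decreasing tuples). -/
noncomputable def multipleHurwitz {r : ℕ} (al : Fin r → ℝ) (s : Fin r → ℂ) : ℂ :=
  ∑' n : DTuple r, hzTerm al s n.1

/-- `U_r(m) = {s ∈ ℂ^r : Re(s_1+⋯+s_i) > i − m for 1 ≤ i ≤ r}` (0-based indexing). -/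
def Ur (r : ℕ) (m : ℤ) : Set (Fin r → ℂ) :=
  {s | ∀ i : Fin r, ((i : ℕ) + 1 - m : ℝ) < (∑ j ∈ Finset.Iic i, s j).re}

/-- `(s)_k = s(s+1)⋯(s+k)/(k+1)!` for `k ≥ 0` and `(s)_k = 1` for `k < 0`. -/
noncomputable def pochZ (s : ℂ) (k : ℤ) : ℂ :=
  if 0 ≤ k then (∏ j ∈ Finset.range (k.toNat + 1), (s + j)) / (Nat.factorial (k.toNat + 1))
  else 1

/-- The hyperplane `H_{i,k} : s_1 + ⋯ + s_i = i − k` (0-based: `i` here is paper's `i−1`). -/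
def Hplane (r : ℕ) (i : Fin r) (k : ℕ) : Set (Fin r → ℂ) :=
  {s | ∑ j ∈ Finset.Iic i, s j = ((i : ℕ) + 1 : ℂ) - k}

/-- The union of the hyperplanes `H_{i,k}` for `(i,k)` satisfying the predicate `P`. -/
def polarSet {r : ℕ} (P : Fin r → ℕ → Prop) : Set (Fin r → ℂ) :=
  {s | ∃ i k, P i k ∧ s ∈ Hplane r i k}

/-- `F` has (at most) simple poles along the hyperplanes `H_{i,k}`, `(i,k) ∈ P`:
around every point `p`, multiplying `F` by the (finitely many) linear factors
`s_1+⋯+s_i−i+k` of the members of `P` passing through `p` yields a function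
that extends analytically to a neighbourhood of `p`. -/
def SimplePolesAlong {r : ℕ} (P : Fin r → ℕ → Prop) (F : (Fin r → ℂ) → ℂ) : Prop :=
  ∀ p : Fin r → ℂ, ∀ T : Finset (Fin r × ℕ),
    (∀ i k, (i, k) ∈ T ↔ (P i k ∧ p ∈ Hplane r i k)) →
    ∃ (V : Set (Fin r → ℂ)) (G : (Fin r → ℂ) → ℂ),
      IsOpen V ∧ p ∈ V ∧ AnalyticOnNhd ℂ G V ∧
      ∀ s ∈ V, s ∉ polarSet P →
        G s = (∏ q ∈ T, ((∑ j ∈ Finset.Iic q.1, s j) - ((q.1 : ℕ) + 1 : ℂ) + (q.2 : ℂ))) * F s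

/-- From `(s_1,…,s_r)` (depth `r = r'+2`) and `c ∈ ℂ`, the depth-`(r−1)` tuple
`(s_1+s_2+c, s_3, …, s_r)`. -/
noncomputable def contractArgs {r : ℕ} (s : Fin (r + 2) → ℂ) (c : ℂ) : Fin (r + 1) → ℂ :=
  fun i => if i = 0 then s 0 + s 1 + c else s i.succ

/-- From `(λ_1,…,λ_r)` (depth `r = r'+2`), the depth-`(r−1)` tuple `(λ_1+λ_2, λ_3,…,λ_r)`. -/
def contractLam {r : ℕ} (lam : Fin (r + 2) → ℝ) : Fin (r + 1) → ℝ :=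
  fun i => if i = 0 then lam 0 + lam 1 else lam i.succ

/-! ### Osgood's lemma -/

lemma torusMap_mem_closedBall {n : ℕ} (c : Fin n → ℂ) {R : ℝ} (hR : 0 < R) (θ : Fin n → ℝ) :
    torusMap c (fun _ => R) θ ∈ Metric.closedBall c R := by
  rw [Metric.mem_closedBall, dist_pi_le_iff hR.le]
  intro i
  simp [torusMap, dist_eq_norm, Complex.norm_exp_ofReal_mul_I, abs_of_pos hR]

lemma continuous_torusMap {n : ℕ} (c : Fin n → ℂ) (R : ℝ) :
    Continuous (torusMap c (fun _ => R)) := by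
  unfold torusMap
  fun_prop

lemma torusMap_sub_ne_zero {n : ℕ} {c s : Fin n → ℂ} {R : ℝ} (hR : 0 < R)
    (hs : s ∈ Metric.ball c R) (θ : Fin n → ℝ) (i : Fin n) :
    torusMap c (fun _ => R) θ i - s i ≠ 0 := by
  rw [Metric.mem_ball, dist_pi_lt_iff hR] at hs
  intro h
  have h1 := hs i
  rw [← sub_eq_zero.1 h] at h1
  simp [torusMap, dist_eq_norm, Complex.norm_exp_ofReal_mul_I, abs_of_pos hR] at h1

/-- Cauchy's integral formula on a polydisc for a continuous, separately holomorphic function. -/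
lemma torus_cauchy : ∀ {n : ℕ} (f : (Fin n → ℂ) → ℂ) (c : Fin n → ℂ) (R : ℝ) (_ : 0 < R)
    (U : Set (Fin n → ℂ)) (_ : Metric.closedBall c R ⊆ U)
    (_ : ContinuousOn f U)
    (_ : ∀ s ∈ U, ∀ i, DifferentiableAt ℂ (fun z => f (Function.update s i z)) (s i))
    (s : Fin n → ℂ) (_ : s ∈ Metric.ball c R),
    torusIntegral (fun x => (∏ i, (x i - s i)⁻¹) * f x) c (fun _ => R)
      = (2 * Real.pi * I) ^ n * f s := by
  intro n
  induction n with
  | zero =>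
    intro f c R hR U hU hc hd s hs
    simp [torusIntegral_dim0, Subsingleton.elim c s]
  | succ n ih =>
    intro f c R hR U hU hc hd s hs
    have hint : TorusIntegrable (fun x => (∏ i, (x i - s i)⁻¹) * f x) c (fun _ => R) := by
      refine Continuous.integrableOn_Icc ?_
      refine Continuous.mul ?_ ?_
      · refine continuous_finsetProd _ fun i _ => ?_
        refine Continuous.inv₀ ?_ fun θ => torusMap_sub_ne_zero hR hs θ i
        have := continuous_torusMap c R
        fun_prop
      · exact hc.comp_continuous (continuous_torusMap c R)
          fun θ => hU (torusMap_mem_closedBall c hR θ)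
    have hs' := hs
    rw [Metric.mem_ball, dist_pi_lt_iff hR] at hs'
    have hcons : ∀ x ∈ Metric.closedBall (c 0) R, ∀ y ∈ Metric.closedBall (c ∘ Fin.succ) R,
        (Fin.cons x y : Fin (n + 1) → ℂ) ∈ U := by
      intro x hx y hy
      apply hU
      rw [Metric.mem_closedBall, dist_pi_le_iff hR.le] at hy ⊢
      intro i
      refine Fin.cases ?_ (fun j => ?_) i
      · simpa using hx
      · simpa using hy j
    have htail : s ∘ Fin.succ ∈ Metric.ball (c ∘ Fin.succ) R := by
      rw [Metric.mem_ball, dist_pi_lt_iff hR]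
      exact fun i => hs' i.succ
    rw [torusIntegral_succ hint]
    have hinner : ∀ x ∈ Metric.sphere (c 0) R,
        (torusIntegral (fun y => (∏ i, ((Fin.cons x y : Fin (n + 1) → ℂ) i - s i)⁻¹)
          * f (Fin.cons x y)) (c ∘ Fin.succ) ((fun _ => R) ∘ Fin.succ))
        = (x - s 0)⁻¹ • ((2 * Real.pi * I) ^ n * f (Fin.cons x (s ∘ Fin.succ))) := by
      intro x hx
      have := ih (fun y => f (Fin.cons x y)) (c ∘ Fin.succ) R hR
        {y | (Fin.cons x y : Fin (n + 1) → ℂ) ∈ U}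
        (fun y hy => hcons x (Metric.sphere_subset_closedBall hx) y hy)
        (hc.comp (by fun_prop) (fun y hy => hy))
        (fun y hy i => by
          have := hd _ hy i.succ
          simpa [Fin.cons_update] using this)
        (s ∘ Fin.succ) htail
      rw [← this, smul_eq_mul, ← torusIntegral_const_mul]
      congr 1
      ext y
      simp only [Fin.prod_univ_succ, Fin.cons_zero, Fin.cons_succ, Function.comp_apply]
      ring
    rw [circleIntegral.integral_congr hR.le hinner]
    have h0 : s 0 ∈ Metric.ball (c 0) R := hs' 0
    rw [Complex.circleIntegral_sub_inv_smul_of_differentiable_on_off_countable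
      (s := ∅) Set.countable_empty h0]
    · rw [smul_eq_mul, pow_succ]
      have : (Fin.cons (s 0) (s ∘ Fin.succ) : Fin (n + 1) → ℂ) = s := Fin.cons_self_tail s
      rw [this]; ring
    · refine continuousOn_const.mul (hc.comp (by fun_prop) ?_)
      intro x hx
      exact hcons x hx _ (Metric.ball_subset_closedBall htail)
    · intro x hx
      refine DifferentiableAt.const_mul ?_ _
      have h := hd _ (hcons x (Metric.ball_subset_closedBall hx.1) _
        (Metric.ball_subset_closedBall htail)) 0
      simpa using h

/-- **Osgood's lemma**: a continuous, separately holomorphic function is analytic. By Cauchy's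
formula it is a continuous linear functional applied to the kernel `∏ (ζᵢ - sᵢ)⁻¹`, and
the kernel depends analytically on `s` as an element of the Banach algebra of continuous functions
on the parameter cube of the torus. -/
lemma osgood {n : ℕ} (f : (Fin n → ℂ) → ℂ) (U : Set (Fin n → ℂ)) (hU : IsOpen U)
    (hc : ContinuousOn f U)
    (hd : ∀ s ∈ U, ∀ i, DifferentiableAt ℂ (fun z => f (Function.update s i z)) (s i)) :
    AnalyticOnNhd ℂ f U := by
  intro c hcU
  obtain ⟨R, hR, hRU⟩ := Metric.nhds_basis_closedBall.mem_iff.1 (hU.mem_nhds hcU)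
  let X : Type := Set.Icc (0 : Fin n → ℝ) (fun _ => 2 * Real.pi)
  have : CompactSpace X := isCompact_iff_compactSpace.1 isCompact_Icc
  let μ : MeasureTheory.Measure X := MeasureTheory.Measure.comap Subtype.val MeasureTheory.volume
  have : MeasureTheory.IsFiniteMeasure μ := by
    constructor
    rw [MeasureTheory.Measure.comap_apply _ Subtype.val_injective
      (fun s hs => MeasurableSet.subtype_image measurableSet_Icc hs) _ MeasurableSet.univ]
    rw [Set.image_univ, Subtype.range_coe]
    exact isCompact_Icc.measure_lt_top
  have hT : Continuous fun θ : X => torusMap c (fun _ => R) θ.1 :=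
    (continuous_torusMap c R).comp continuous_subtype_val
  let a : Fin n → C(X, ℂ) := fun i => ⟨fun θ => torusMap c (fun _ => R) θ.1 i, by fun_prop⟩
  let w : C(X, ℂ) := ⟨fun θ => (∏ _i : Fin n, (R * exp (θ.1 _i * I) * I))
      * f (torusMap c (fun _ => R) θ.1), by
    refine Continuous.mul (continuous_finsetProd _ fun i _ => ?_) ?_
    · have h1 : Continuous fun θ : X => θ.1 i := (continuous_apply i).comp continuous_subtype_val
      exact (continuous_const.mul (Complex.continuous_exp.comp
        ((Complex.continuous_ofReal.comp h1).mul continuous_const))).mul continuous_const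
    exact hc.comp_continuous hT fun θ => hRU (torusMap_mem_closedBall c hR θ.1)⟩
  have hint : ∀ g : C(X, ℂ), MeasureTheory.Integrable g μ := fun g =>
    g.continuous.integrable_of_hasCompactSupport (HasCompactSupport.of_compactSpace _)
  let Λ0 : C(X, ℂ) →ₗ[ℂ] ℂ :=
    { toFun := fun g => ∫ θ, g θ ∂μ
      map_add' := fun g h => MeasureTheory.integral_add (hint g) (hint h)
      map_smul' := fun a g => MeasureTheory.integral_const_mul a _ }
  let Λ : C(X, ℂ) →L[ℂ] ℂ := Λ0.mkContinuous (μ.real Set.univ) (fun g => by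
    have := MeasureTheory.norm_integral_le_of_norm_le_const (μ := μ) (f := g) (C := ‖g‖)
      (Filter.Eventually.of_forall fun x => g.norm_coe_le_norm x)
    calc ‖Λ0 g‖ ≤ _ := this
      _ = _ := by ring)
  let κ : (Fin n → ℂ) → C(X, ℂ) :=
    fun s => ∏ i, Ring.inverse (a i - algebraMap ℂ C(X, ℂ) (s i))
  have hunit : ∀ s ∈ Metric.ball c R, ∀ i, IsUnit (a i - algebraMap ℂ C(X, ℂ) (s i)) := by
    intro s hs i
    rw [ContinuousMap.isUnit_iff_forall_ne_zero]
    intro θ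
    exact torusMap_sub_ne_zero hR hs θ.1 i
  have hκ : AnalyticAt ℂ κ c := by
    refine Finset.analyticAt_fun_prod _ fun i _ => ?_
    have h1 : AnalyticAt ℂ (fun s : Fin n → ℂ => a i - algebraMap ℂ C(X, ℂ) (s i)) c := by
      refine analyticAt_const.sub ?_
      exact ((Algebra.linearMap ℂ C(X, ℂ)).toContinuousLinearMap.comp
        (ContinuousLinearMap.proj (R := ℂ) (φ := fun _ : Fin n => ℂ) i)).analyticAt c
    obtain ⟨u, hu⟩ := hunit c (Metric.mem_ball_self hR) i
    exact (analyticAt_inverse (𝕜 := ℂ) u).comp_of_eq h1 hu.symm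
  have hmain : AnalyticAt ℂ
      (fun s => ((2 * Real.pi * I) ^ n)⁻¹ * Λ (w * κ s)) c :=
    analyticAt_const.mul ((Λ.analyticAt _).comp (analyticAt_const.mul hκ))
  refine hmain.congr ?_
  filter_upwards [Metric.ball_mem_nhds c hR] with s hs
  have h2 : ((2 * Real.pi * I) ^ n : ℂ) ≠ 0 := pow_ne_zero _ two_pi_I_ne_zero
  rw [inv_mul_eq_iff_eq_mul₀ h2, ← torus_cauchy f c R hR U hRU hc hd s hs]
  have hκe : ∀ θ : X, κ s θ = ∏ i, (torusMap c (fun _ => R) θ.1 i - s i)⁻¹ := by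
    intro θ
    simp only [κ, ContinuousMap.prod_apply]
    refine Finset.prod_congr rfl fun i _ => ?_
    have h3 := congrArg (fun g : C(X, ℂ) => g θ) (Ring.mul_inverse_cancel _ (hunit s hs i))
    exact eq_inv_of_mul_eq_one_right h3
  calc Λ (w * κ s) = ∫ θ : X, (∏ _i : Fin n, (R * exp (θ.1 _i * I) * I)) *
        ((∏ i, (torusMap c (fun _ => R) θ.1 i - s i)⁻¹) * f (torusMap c (fun _ => R) θ.1)) ∂μ := by
        refine MeasureTheory.integral_congr_ae (Filter.Eventually.of_forall fun θ => ?_)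
        show w θ * κ s θ = _
        rw [hκe]
        simp only [w, ContinuousMap.coe_mk]
        ring
    _ = _ := by
        rw [MeasureTheory.integral_subtype_comap measurableSet_Icc
          (fun θ : Fin n → ℝ => (∏ _i : Fin n, (R * exp (θ _i * I) * I)) *
          ((∏ i, (torusMap c (fun _ => R) θ i - s i)⁻¹) * f (torusMap c (fun _ => R) θ)))]
        rfl

/-! ### The Euler-Maclaurin error -/

lemma hasDerivAt_rpowC {t : ℝ} (ht : 0 < t) (w : ℂ) :
    HasDerivAt (fun t : ℝ => rpowC t w) (w * rpowC t (w - 1)) t := by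
  unfold rpowC
  have h1 : HasDerivAt (fun t : ℝ => ((Real.log t : ℝ) : ℂ)) ((t⁻¹ : ℝ) : ℂ) t :=
    (Real.hasDerivAt_log ht.ne').ofReal_comp
  have h2 := (h1.const_mul w).cexp
  convert h2 using 1
  have h3 : Complex.exp (-(Real.log t : ℂ)) = ((t⁻¹ : ℝ) : ℂ) := by
    rw [← Complex.ofReal_neg, ← Complex.ofReal_exp, Real.exp_neg, Real.exp_log ht]
  rw [sub_mul, sub_eq_add_neg, Complex.exp_add, one_mul, h3]
  ring

lemma norm_rpowC {t : ℝ} (ht : 0 < t) (w : ℂ) : ‖rpowC t w‖ = t ^ w.re := by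
  rw [rpowC, Complex.norm_exp, Complex.re_mul_ofReal, Real.rpow_def_of_pos ht, mul_comm]

lemma rpowC_add (t : ℝ) (v w : ℂ) : rpowC t (v + w) = rpowC t v * rpowC t w := by
  rw [rpowC, rpowC, rpowC, ← Complex.exp_add, add_mul]

lemma continuousOn_rpowC (w : ℂ) : ContinuousOn (fun t : ℝ => rpowC t w) (Set.Ioi 0) :=
  fun _ ht => (hasDerivAt_rpowC ht w).continuousAt.continuousWithinAt

lemma intervalIntegrable_rpowC {x : ℝ} (hx : 0 < x) (w : ℂ) :
    IntervalIntegrable (fun t => rpowC (x + t) w) MeasureTheory.volume 0 1 := by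
  apply ContinuousOn.intervalIntegrable
  rw [Set.uIcc_of_le zero_le_one]
  exact (continuousOn_rpowC w).comp (by fun_prop) fun t ht => by
    have := ht.1
    show 0 < x + t
    linarith

lemma rpowC_diff {x : ℝ} (hx : 0 < x) (w : ℂ) :
    rpowC (x + 1) w - rpowC x w = w * ∫ t in (0 : ℝ)..1, rpowC (x + t) (w - 1) := by
  have h := intervalIntegral.integral_eq_sub_of_hasDerivAt (a := (0 : ℝ)) (b := 1)
    (f := fun t : ℝ => rpowC (x + t) w) (f' := fun t => w * rpowC (x + t) (w - 1)) (fun t ht => by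
      rw [Set.uIcc_of_le zero_le_one] at ht
      have := ht.1
      exact (hasDerivAt_rpowC (t := x + t) (by linarith) w).comp_const_add x t)
    ((intervalIntegrable_rpowC hx _).const_mul w)
  rw [intervalIntegral.integral_const_mul] at h
  simpa using h.symm

/-- The error of order `N` in the Euler-Maclaurin expansion of `t ↦ t^{-z}` on `[x, x + 1]`,
evaluated at the (possibly exterior) point `x + 1 - η`. -/
noncomputable def emRem (N : ℕ) (z : ℂ) (x η : ℝ) : ℂ :=
  rpowC (x + 1 - η) (-z) - (∫ t in (0 : ℝ)..1, rpowC (x + t) (-z))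
    + ∑ k ∈ Finset.range N, (∏ j ∈ Finset.range k, (z + (j : ℂ))) / (Nat.factorial (k + 1))
        * (bernoulliFun (k + 1) η : ℂ) * (rpowC (x + 1) (-(z + k)) - rpowC x (-(z + k)))

lemma hasDerivAt_rpowC_reflect {x η : ℝ} (h : η < x + 1) (z : ℂ) :
    HasDerivAt (fun η : ℝ => rpowC (x + 1 - η) (-z)) (z * rpowC (x + 1 - η) (-(z + 1))) η := by
  have h1 := (hasDerivAt_rpowC (t := x + 1 - η) (by linarith) (-z)).comp_const_sub (x + 1) η
  refine h1.congr_deriv ?_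
  rw [show -(z + 1) = -z - 1 by ring]; ring

lemma hasDerivAt_emRem_zero {x η : ℝ} (h : η < x + 1) (z : ℂ) :
    HasDerivAt (fun η : ℝ => emRem 0 z x η) (z * rpowC (x + 1 - η) (-(z + 1))) η := by
  simpa [emRem] using (hasDerivAt_rpowC_reflect h z).sub_const
    (∫ t in (0 : ℝ)..1, rpowC (x + t) (-z))

/-- Differentiating in `η` lowers the order by one and raises the exponent by one. -/
lemma hasDerivAt_emRem_succ (N : ℕ) {x η : ℝ} (hx : 0 < x) (h : η < x + 1) (z : ℂ) :
    HasDerivAt (fun η : ℝ => emRem (N + 1) z x η) (z * emRem N (z + 1) x η) η := by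
  have hB : ∀ k : ℕ, HasDerivAt (fun η : ℝ => ((bernoulliFun (k + 1) η : ℝ) : ℂ))
      (((k + 1 : ℝ) * bernoulliFun k η : ℝ) : ℂ) η := fun k => by
    have := (hasDerivAt_bernoulliFun (k + 1) η).ofReal_comp
    simpa using this
  have hS := HasDerivAt.fun_sum (u := Finset.range (N + 1)) (fun k _ =>
    ((hB k).const_mul ((∏ j ∈ Finset.range k, (z + (j : ℂ))) / (Nat.factorial (k + 1)))).mul_const
      (rpowC (x + 1) (-(z + k)) - rpowC x (-(z + k))))
  have := ((hasDerivAt_rpowC_reflect h z).sub_const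
    (∫ t in (0 : ℝ)..1, rpowC (x + t) (-z))).add hS
  refine this.congr_deriv ?_
  rw [Finset.sum_range_succ', emRem, mul_add, Finset.mul_sum]
  have h0 := rpowC_diff hx (-z)
  have hk : ∀ k ∈ Finset.range N,
      (∏ j ∈ Finset.range (k + 1), (z + (j : ℂ))) / (Nat.factorial (k + 1 + 1))
        * ((((k + 1 : ℕ) + 1 : ℝ) * bernoulliFun (k + 1) η : ℝ) : ℂ)
        * (rpowC (x + 1) (-(z + (k + 1 : ℕ))) - rpowC x (-(z + (k + 1 : ℕ))))
      = z * ((∏ j ∈ Finset.range k, (z + 1 + (j : ℂ))) / (Nat.factorial (k + 1))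
        * (bernoulliFun (k + 1) η : ℂ)
        * (rpowC (x + 1) (-(z + 1 + k)) - rpowC x (-(z + 1 + k)))) := by
    intro k _
    have e1 : (z + (k + 1 : ℕ) : ℂ) = z + 1 + k := by push_cast; ring
    have e2 : (∏ j ∈ Finset.range (k + 1), (z + (j : ℂ)))
        = (∏ j ∈ Finset.range k, (z + 1 + (j : ℂ))) * z := by
      rw [Finset.prod_range_succ']
      congr 1
      · refine Finset.prod_congr rfl fun j _ => ?_
        push_cast; ring
      · simp
    rw [e1, e2, Nat.factorial_succ (k + 1)]
    have : ((k : ℂ) + 1 + 1) ≠ 0 := by exact_mod_cast (Nat.succ_ne_zero (k + 1))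
    have h2 : ((Nat.factorial (k + 1) : ℕ) : ℂ) ≠ 0 := by
      exact_mod_cast Nat.factorial_ne_zero _
    push_cast
    field_simp
  rw [Finset.sum_congr rfl hk]
  simp only [Finset.range_zero, Finset.prod_empty, zero_add, Nat.factorial_one, Nat.cast_one,
    Nat.cast_zero, add_zero, bernoulliFun_zero]
  rw [h0, show -z - 1 = -(z + 1) by ring]
  push_cast
  ring

lemma continuousOn_emRem (N : ℕ) {x : ℝ} (hx : 0 < x) (z : ℂ) :
    ContinuousOn (fun η : ℝ => emRem N z x η) (Set.Iio (x + 1)) := by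
  intro η hη
  cases N with
  | zero => exact (hasDerivAt_emRem_zero hη z).continuousAt.continuousWithinAt
  | succ N => exact (hasDerivAt_emRem_succ N hx hη z).continuousAt.continuousWithinAt

/-- Over `[0, 1]` the Bernoulli polynomials of positive degree have mean zero, and
`η ↦ (x + 1 - η)^{-z}` has mean `∫₀¹ (x + t)^{-z} dt`. -/
lemma integral_emRem (N : ℕ) {x : ℝ} (hx : 0 < x) (z : ℂ) :
    ∫ η in (0 : ℝ)..1, emRem N z x η = 0 := by
  have h1 : IntervalIntegrable (fun η => rpowC (x + 1 - η) (-z)) MeasureTheory.volume 0 1 := by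
    apply ContinuousOn.intervalIntegrable
    rw [Set.uIcc_of_le zero_le_one]
    intro η hη
    have := hη.2
    exact (hasDerivAt_rpowC_reflect (by linarith) z).continuousAt.continuousWithinAt
  have hB : ∀ k ∈ Finset.range N, IntervalIntegrable (fun η : ℝ =>
      (∏ j ∈ Finset.range k, (z + (j : ℂ))) / (Nat.factorial (k + 1))
        * (bernoulliFun (k + 1) η : ℂ) * (rpowC (x + 1) (-(z + k)) - rpowC x (-(z + k))))
      MeasureTheory.volume 0 1 := fun k _ => by
    apply Continuous.intervalIntegrable
    have := continuous_bernoulliFun (k + 1)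
    fun_prop
  unfold emRem
  rw [intervalIntegral.integral_add (h1.sub intervalIntegrable_const)
    (by simpa only [Finset.sum_fn] using IntervalIntegrable.sum _ hB),
    intervalIntegral.integral_sub h1 intervalIntegrable_const,
    intervalIntegral.integral_finsetSum hB, Finset.sum_eq_zero]
  · rw [intervalIntegral.integral_const]
    have := intervalIntegral.integral_comp_sub_left (a := (0 : ℝ)) (b := 1)
      (fun t => rpowC (x + t) (-z)) 1
    simp only [← add_sub_assoc, sub_self, sub_zero] at this
    rw [this]
    simp
  · intro k _
    rw [intervalIntegral.integral_mul_const, intervalIntegral.integral_const_mul,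
      intervalIntegral.integral_ofReal, integral_bernoulliFun_eq_zero (Nat.succ_ne_zero k)]
    simp

/-- A function on `[-1, 1]` of mean zero over `[0, 1]` is bounded by twice any bound for
its derivative. -/
lemma norm_le_of_mean_zero {f f' : ℝ → ℂ} {C : ℝ}
    (hf : ∀ η ∈ Set.Icc (-1 : ℝ) 1, HasDerivAt f (f' η) η)
    (hC : ∀ η ∈ Set.Icc (-1 : ℝ) 1, ‖f' η‖ ≤ C)
    (h0 : ∫ η in (0 : ℝ)..1, f η = 0) {η : ℝ} (hη : η ∈ Set.Icc (-1 : ℝ) 1) :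
    ‖f η‖ ≤ 2 * C := by
  have hC0 : 0 ≤ C := (norm_nonneg _).trans (hC η hη)
  have hcont : IntervalIntegrable f MeasureTheory.volume 0 1 := by
    apply ContinuousOn.intervalIntegrable
    rw [Set.uIcc_of_le zero_le_one]
    intro u hu
    exact (hf u ⟨by linarith [hu.1], hu.2⟩).continuousAt.continuousWithinAt
  have h1 : f η = ∫ u in (0 : ℝ)..1, (f η - f u) := by
    rw [intervalIntegral.integral_sub intervalIntegrable_const hcont, h0]
    simp
  rw [h1]
  have := intervalIntegral.norm_integral_le_of_norm_le_const (a := (0 : ℝ)) (b := 1)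
    (f := fun u => f η - f u) (C := 2 * C) (fun u hu => by
      rw [Set.uIoc_of_le zero_le_one] at hu
      have hu' : u ∈ Set.Icc (-1 : ℝ) 1 := ⟨by linarith [hu.1], hu.2⟩
      have h2 := (convex_Icc (-1 : ℝ) 1).norm_image_sub_le_of_norm_hasDerivWithin_le
        (fun v hv => (hf v hv).hasDerivWithinAt) hC hu' hη
      refine h2.trans ?_
      have h3 : ‖η - u‖ ≤ 2 := by
        rw [Real.norm_eq_abs, abs_le]
        constructor <;> linarith [hη.1, hη.2, hu'.1, hu'.2]
      nlinarith)
  simpa using this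

/-- The error of order `N` at `z` is at most a constant times `|z (z + 1) ⋯ (z + N)|` and the
supremum of `t^{-Re z - N - 1}` over `[x, x + 2]`: by induction on `N`, from the bound
for its derivative in `η` and its vanishing mean. -/
lemma norm_emRem_le (N : ℕ) : ∀ (z : ℂ) {x : ℝ} (_ : 0 < x) {M : ℝ}
    (_ : ∀ t ∈ Set.Icc x (x + 2), t ^ (-(z.re + N + 1)) ≤ M) {η : ℝ}
    (_ : η ∈ Set.Icc (-1 : ℝ) 1),
    ‖emRem N z x η‖ ≤ 2 ^ (N + 1) * (∏ j ∈ Finset.range (N + 1), ‖z + (j : ℂ)‖) * M := by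
  induction N with
  | zero =>
    intro z x hx M hM η hη
    refine (norm_le_of_mean_zero (C := ‖z‖ * M)
      (fun η hη => hasDerivAt_emRem_zero (by linarith [hη.2]) z) ?_
      (integral_emRem 0 hx z) hη).trans (le_of_eq ?_)
    · intro η hη
      rw [norm_mul, norm_rpowC (by linarith [hη.2])]
      refine mul_le_mul_of_nonneg_left ?_ (norm_nonneg _)
      simpa using hM (x + 1 - η) ⟨by linarith [hη.2], by linarith [hη.1]⟩
    · simp [mul_assoc]
  | succ N ih =>
    intro z x hx M hM η hη
    refine (norm_le_of_mean_zero (C := ‖z‖ * (2 ^ (N + 1) *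
      (∏ j ∈ Finset.range (N + 1), ‖z + 1 + (j : ℂ)‖) * M))
      (fun η hη => hasDerivAt_emRem_succ N hx (by linarith [hη.2]) z) ?_
      (integral_emRem (N + 1) hx z) hη).trans (le_of_eq ?_)
    · intro η hη
      rw [norm_mul]
      refine mul_le_mul_of_nonneg_left (ih (z + 1) hx ?_ hη) (norm_nonneg _)
      intro t ht
      have := hM t ht
      convert this using 3
      push_cast
      simp
      ring
    · rw [Finset.prod_range_succ' _ (N + 1)]
      have : ∀ j : ℕ, z + ((j + 1 : ℕ) : ℂ) = z + 1 + j := fun j => by push_cast; ring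
      simp only [this]
      simp
      ring

lemma differentiable_rpowC (y : ℝ) : Differentiable ℂ (fun w : ℂ => rpowC y w) := by
  unfold rpowC
  fun_prop

/-- The integral is `((x + 1)^{1 - z} - x^{1 - z}) / (1 - z)` for `z ≠ 1`; by continuity the
singularity at `z = 1` is removable. -/
lemma differentiable_integral_rpowC {x : ℝ} (hx : 0 < x) :
    Differentiable ℂ (fun z : ℂ => ∫ t in (0 : ℝ)..1, rpowC (x + t) (-z)) := by
  rw [← differentiableOn_univ,
    ← Complex.differentiableOn_compl_singleton_and_continuousAt_iff (c := 1) Filter.univ_mem]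
  constructor
  · have : DifferentiableOn ℂ (fun z : ℂ => (rpowC (x + 1) (1 - z) - rpowC x (1 - z)) / (1 - z))
        (Set.univ \ {1}) := by
      intro z hz
      have h1 := differentiable_rpowC (x + 1)
      have h2 := differentiable_rpowC x
      refine DifferentiableAt.differentiableWithinAt ?_
      refine DifferentiableAt.div (by fun_prop) (by fun_prop) ?_
      exact sub_ne_zero.2 (Ne.symm hz.2)
    refine this.congr fun z hz => ?_
    have hz1 : 1 - z ≠ 0 := sub_ne_zero.2 (Ne.symm hz.2)
    rw [rpowC_diff hx (1 - z), mul_div_cancel_left₀ _ hz1, show 1 - z - 1 = -z by ring]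
  · have h1 : Continuous (fun z : ℂ => ∫ t in (0 : ℝ)..1, rpowC (x + max t 0) (-z)) := by
      refine intervalIntegral.continuous_parametric_intervalIntegral_of_continuous ?_
        continuous_const
      have h2 : Continuous fun p : ℂ × ℝ => Real.log (x + max p.2 0) :=
        Continuous.log (by fun_prop) fun p => by positivity
      unfold rpowC Function.uncurry
      fun_prop
    -- `max t 0 = t` on `[0, 1]`; the maximum makes the integrand continuous for all real `t`
    convert h1.continuousAt using 2 with z
    refine intervalIntegral.integral_congr fun t ht => ?_
    rw [Set.uIcc_of_le zero_le_one] at ht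
    simp [max_eq_left ht.1]

lemma differentiable_emRem (N : ℕ) {x : ℝ} (hx : 0 < x) (η : ℝ) :
    Differentiable ℂ (fun z => emRem N z x η) := by
  have h1 := differentiable_integral_rpowC hx
  have h2 := differentiable_rpowC (x + 1)
  have h3 := differentiable_rpowC x
  have h4 := differentiable_rpowC (x + 1 - η)
  unfold emRem
  fun_prop

/-- Bound for the error term, uniform for `z` in a disc and expressed by the very base
`x + 1 - η` of the term being expanded. -/
lemma exists_norm_emRem_le (N : ℕ) (B : ℝ) (hB : 0 ≤ B) : ∃ C, 0 ≤ C ∧ ∀ z : ℂ, ‖z‖ ≤ B →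
    ∀ x : ℝ, 1 ≤ x → ∀ η ∈ Set.Icc (-1 : ℝ) 1,
      ‖emRem N z x η‖ ≤ C * (x + 1 - η) ^ (-(z.re + N + 1)) := by
  refine ⟨2 ^ (N + 1) * (∏ j ∈ Finset.range (N + 1), (B + j)) * 3 ^ (B + N + 1), by positivity, ?_⟩
  intro z hz x hx η hη
  have hy : 0 < x + 1 - η := by linarith [hη.2]
  have hM : ∀ t ∈ Set.Icc x (x + 2), t ^ (-(z.re + N + 1)) ≤
      3 ^ (B + N + 1) * (x + 1 - η) ^ (-(z.re + N + 1)) := by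
    intro t ht
    have ht0 : 0 < t := by linarith [ht.1]
    have hq : t = (t / (x + 1 - η)) * (x + 1 - η) := by field_simp
    have hq0 : 0 < t / (x + 1 - η) := by positivity
    have hre := (Complex.abs_re_le_norm z).trans hz
    rw [abs_le] at hre
    have hN : (0 : ℝ) ≤ N := Nat.cast_nonneg N
    conv_lhs => rw [hq, Real.mul_rpow hq0.le hy.le]
    refine mul_le_mul_of_nonneg_right ?_ (by positivity)
    -- `t` and `x + 1 - η` both lie in `[x, x + 2]` with `x ≥ 1`, so their ratio is in `[1/3, 3]`
    rcases le_total 1 (t / (x + 1 - η)) with h | h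
    · have h3 : t / (x + 1 - η) ≤ 3 := by
        rw [div_le_iff₀ hy]; linarith [ht.2, hη.2]
      calc (t / (x + 1 - η)) ^ (-(z.re + N + 1)) ≤ (t / (x + 1 - η)) ^ (B + N + 1) :=
            Real.rpow_le_rpow_of_exponent_le h (by linarith [hre.1])
        _ ≤ _ := Real.rpow_le_rpow hq0.le h3 (by linarith)
    · have h3 : (t / (x + 1 - η))⁻¹ ≤ 3 := by
        rw [inv_div, div_le_iff₀ ht0]; linarith [ht.1, hη.1]
      calc (t / (x + 1 - η)) ^ (-(z.re + N + 1)) = ((t / (x + 1 - η))⁻¹) ^ (z.re + N + 1) := by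
            rw [Real.rpow_neg hq0.le, Real.inv_rpow hq0.le]
        _ ≤ ((t / (x + 1 - η))⁻¹) ^ (B + N + 1) :=
            Real.rpow_le_rpow_of_exponent_le ((one_le_inv₀ hq0).2 h) (by linarith [hre.2])
        _ ≤ _ := Real.rpow_le_rpow (by positivity) h3 (by linarith)
  refine (norm_emRem_le N z (by linarith) hM hη).trans ?_
  rw [← mul_assoc]
  gcongr with j hj
  refine (norm_add_le _ _).trans ?_
  rw [Complex.norm_natCast]
  gcongr

/-- The truncated Euler-Maclaurin expansion (for fixed shift `η`) of `∑_{m ≥ 1} (y + m - η)^{-z}`. -/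
noncomputable def emMain (N : ℕ) (z : ℂ) (η y : ℝ) : ℂ :=
  (z - 1)⁻¹ * rpowC y (-(z + -1))
    + ∑ k ∈ Finset.range N, (∏ j ∈ Finset.range k, (z + (j : ℂ))) / (Nat.factorial (k + 1))
        * (bernoulliFun (k + 1) η : ℂ) * rpowC y (-(z + k))

/-- Up to the error, each term is a difference of consecutive values of `emMain`. -/
lemma rpowC_sub_emRem (N : ℕ) {z : ℂ} (hz : z ≠ 1) {x : ℝ} (hx : 0 < x) (η : ℝ) :
    rpowC (x + 1 - η) (-z) - emRem N z x η = emMain N z η x - emMain N z η (x + 1) := by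
  have h := rpowC_diff hx (-(z + -1))
  have hz1 : z - 1 ≠ 0 := sub_ne_zero.2 hz
  rw [show -(z + -1) - 1 = -z by ring] at h
  have h' : (∫ t in (0 : ℝ)..1, rpowC (x + t) (-z))
      = (z - 1)⁻¹ * (rpowC x (-(z + -1)) - rpowC (x + 1) (-(z + -1))) := by
    rw [← neg_sub (rpowC (x + 1) _), h]
    field_simp
    ring
  rw [emRem, emMain, emMain, h']
  simp only [mul_sub, Finset.sum_sub_distrib]
  ring

lemma tendsto_rpowC (x : ℝ) {w : ℂ} (hw : w.re < 0) :
    Filter.Tendsto (fun j : ℕ => rpowC (x + j) w) Filter.atTop (nhds 0) := by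
  rw [tendsto_zero_iff_norm_tendsto_zero]
  have h1 : Filter.Tendsto (fun j : ℕ => x + (j : ℝ)) Filter.atTop Filter.atTop :=
    Filter.tendsto_atTop_add_const_left _ _ tendsto_natCast_atTop_atTop
  have h2 := (tendsto_rpow_neg_atTop (y := -w.re) (by linarith)).comp h1
  refine h2.congr' ?_
  filter_upwards [h1.eventually_gt_atTop 0] with j hj
  rw [norm_rpowC hj]
  simp

lemma tendsto_emMain (N : ℕ) {z : ℂ} (hz : 1 < z.re) (η x : ℝ) :
    Filter.Tendsto (fun j : ℕ => emMain N z η (x + j)) Filter.atTop (nhds 0) := by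
  unfold emMain
  have h1 := (tendsto_rpowC x (w := -(z + -1)) (by simp; linarith)).const_mul (z - 1)⁻¹
  have h2 := tendsto_finsetSum (Finset.range N) fun k _ =>
    (tendsto_rpowC x (w := -(z + k)) (by
      simp
      have : (0 : ℝ) ≤ k := Nat.cast_nonneg k
      linarith)).const_mul
      ((∏ j ∈ Finset.range k, (z + (j : ℂ))) / (Nat.factorial (k + 1))
        * (bernoulliFun (k + 1) η : ℂ))
  simpa using h1.add h2

/-! ### Tuples and absolute convergence -/

lemma sum_Iic_contractArgs {r : ℕ} (s : Fin (r + 2) → ℂ) (c : ℂ) (i : Fin (r + 1)) :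
    ∑ j ∈ Finset.Iic i, contractArgs s c j = (∑ j ∈ Finset.Iic i.succ, s j) + c := by
  have h : ∀ {n : ℕ} (i : Fin n) (f : Fin n → ℂ),
      ∑ j ∈ Finset.Iic i, f j = ∑ j, if j ≤ i then f j else 0 := by
    intro n i f
    rw [← Finset.sum_filter]
    congr 1
    ext j
    simp
  rw [h, h, Fin.sum_univ_succ, Fin.sum_univ_succ, Fin.sum_univ_succ]
  simp only [contractArgs, Fin.succ_le_succ_iff, Fin.zero_le, if_true, Fin.succ_ne_zero, if_false]
  rw [Fin.succ_zero_eq_one]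
  ring

lemma contractArgs_mem {r : ℕ} {s : Fin (r + 2) → ℂ} (c : ℂ)
    (hs : ∀ i : Fin (r + 1), ((i : ℕ) + 1 : ℝ) < (∑ j ∈ Finset.Iic i.succ, s j).re + c.re) :
    contractArgs s c ∈ Ur (r + 1) 0 := by
  intro i
  rw [sum_Iic_contractArgs, Complex.add_re]
  simpa using hs i

/-- The contractions with `Re c ≥ -1` of a point of `U_r` lie in `U_{r-1}`. -/
lemma contractArgs_mem' {r : ℕ} {s : Fin (r + 2) → ℂ} (hs : s ∈ Ur (r + 2) 0) {c : ℂ}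
    (hc : -1 ≤ c.re) : contractArgs s c ∈ Ur (r + 1) 0 := by
  refine contractArgs_mem c fun i => ?_
  have := hs i.succ
  simp only [Fin.val_succ, Nat.cast_add, Nat.cast_one, Int.cast_zero, sub_zero] at this
  linarith

/-- The tuple `(n₁ + 1 + j, n₁, n₂, …)` obtained from `((n₁, n₂, …), j)`. -/
def dcons {r : ℕ} (p : DTuple (r + 1) × ℕ) : DTuple (r + 2) :=
  ⟨Fin.cons (p.1.1 0 + 1 + p.2) p.1.1, by
    constructor
    · intro i j hij
      induction j using Fin.cases with
      | zero => exact absurd hij (Fin.not_lt_zero _)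
      | succ j =>
        induction i using Fin.cases with
        | zero =>
          have := p.1.2.1.antitone (Fin.zero_le j)
          simp only [Fin.cons_zero, Fin.cons_succ]
          omega
        | succ i =>
          simpa using p.1.2.1 (Fin.succ_lt_succ_iff.1 hij)
    · intro i
      induction i using Fin.cases with
      | zero => simp
      | succ i => simpa using p.1.2.2 i⟩

/-- Splitting off the largest entry of a strictly decreasing tuple. -/
def dEquiv (r : ℕ) : DTuple (r + 1) × ℕ ≃ DTuple (r + 2) where
  toFun := dcons
  invFun n := (⟨Fin.tail n.1, fun _ _ h => n.2.1 (Fin.succ_lt_succ_iff.2 h), fun i => n.2.2 i.succ⟩,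
    n.1 0 - n.1 1 - 1)
  left_inv := by
    rintro ⟨n, j⟩
    refine Prod.ext (Subtype.ext ?_) ?_
    · simp [dcons]
    · simp only [dcons, Fin.cons_zero, Fin.cons_one]
      omega
  right_inv := by
    intro n
    refine Subtype.ext ?_
    have h : n.1 1 < n.1 0 := n.2.1 (by simp)
    have h2 : Fin.tail n.1 0 + 1 + (n.1 0 - n.1 1 - 1) = n.1 0 := by
      have : Fin.tail n.1 0 = n.1 1 := rfl
      omega
    simp only [dcons, h2]
    exact Fin.cons_self_tail n.1

lemma hzTerm_dcons {r : ℕ} (al : Fin (r + 2) → ℝ) (s : Fin (r + 2) → ℂ)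
    (p : DTuple (r + 1) × ℕ) :
    hzTerm al s (dcons p).1 = rpowC (((p.1.1 0 + 1 + p.2 : ℕ) : ℝ) + al 0) (-(s 0))
      * hzTerm (fun i => al i.succ) (fun i => s i.succ) p.1.1 := by
  simp [hzTerm, dcons, Fin.prod_univ_succ (n := r + 1)]

/-- The depth `r - 1` terms at `(s₁ + s₂ + c, s₃, …)` are those at `(s₂, s₃, …)` times a power of
`n₂ + α₂`. -/
lemma hzTerm_contractArgs {r : ℕ} (al : Fin (r + 2) → ℝ) (s : Fin (r + 2) → ℂ) (c : ℂ)
    (n : Fin (r + 1) → ℕ) :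
    hzTerm (fun i => al i.succ) (contractArgs s c) n = rpowC ((n 0 : ℝ) + al 1) (-(s 0 + c))
      * hzTerm (fun i => al i.succ) (fun i => s i.succ) n := by
  simp only [hzTerm, Fin.prod_univ_succ (n := r), contractArgs]
  rw [← mul_assoc]
  congr 1
  simp only [if_true, Fin.succ_zero_eq_one]
  rw [← rpowC_add]
  congr 1
  ring

/-- Absolute convergence of the multiple Hurwitz zeta series on `U_r`, by induction on the depth:
writing `s₁ = (1 + ε) + (s₁ - 1 - ε)` and using `n₁ + α₁ ≥ n₂ + α₂`, the second part is absorbed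
in the second exponent, and the sum over `n₁` converges because of the first. -/
lemma summable_hzTerm : ∀ (r : ℕ) (al : Fin (r + 1) → ℝ) (_ : ∀ i, al i ∈ Set.Ico (0 : ℝ) 1)
    (s : Fin (r + 1) → ℂ) (_ : s ∈ Ur (r + 1) 0),
    Summable fun n : DTuple (r + 1) => ‖hzTerm al s n.1‖ := by
  intro r
  induction r with
  | zero =>
    intro al hal s hs
    have h0 := hs 0
    have hI : Finset.Iic (0 : Fin 1) = {0} := by decide
    simp [hI] at h0
    have hinj : Function.Injective (fun n : DTuple 1 => n.1 0) := by
      intro n m h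
      refine Subtype.ext (funext fun i => ?_)
      rw [Subsingleton.elim i 0]
      exact h
    have h1 := (Real.summable_nat_rpow (p := -(s 0).re)).2 (by linarith)
    refine Summable.of_nonneg_of_le (fun _ => norm_nonneg _) (fun n => ?_)
      (h1.comp_injective hinj)
    have hn : (0 : ℝ) < n.1 0 := by exact_mod_cast n.2.2 0
    have ha := (hal 0).1
    simp only [hzTerm, Fin.prod_univ_succ, Fin.prod_univ_zero, mul_one, Function.comp_apply]
    rw [norm_rpowC (by linarith)]
    refine Real.rpow_le_rpow_of_nonpos hn (by linarith) ?_
    simp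
    linarith
  | succ r ih =>
    intro al hal s hs
    have hε : ∃ ε : ℝ, 0 < ε ∧ ∀ i : Fin (r + 2),
        ((i : ℕ) + 1 : ℝ) + ε < (∑ j ∈ Finset.Iic i, s j).re := by
      have : ∀ᶠ ε : ℝ in nhdsWithin 0 (Set.Ioi 0), ∀ i : Fin (r + 2),
          ((i : ℕ) + 1 : ℝ) + ε < (∑ j ∈ Finset.Iic i, s j).re := by
        refine Filter.eventually_all.2 fun i => ?_
        refine Filter.Eventually.filter_mono nhdsWithin_le_nhds ?_
        have hcont : Continuous fun ε : ℝ => ((i : ℕ) + 1 : ℝ) + ε := by fun_prop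
        refine hcont.continuousAt.eventually_lt continuousAt_const ?_
        have := hs i
        simp at this ⊢
        exact this
      obtain ⟨ε, h1, h2⟩ := (this.and self_mem_nhdsWithin).exists
      exact ⟨ε, h2, h1⟩
    obtain ⟨ε, hε, hsl⟩ := hε
    have h0 := hsl 0
    have hI : Finset.Iic (0 : Fin (r + 2)) = {0} := by
      ext j; simp
    simp [hI] at h0
    have hc := ih (fun i => al i.succ) (fun i => hal i.succ) (contractArgs s (-(1 + ε) : ℝ))
      (contractArgs_mem _ fun i => by
        have := hsl i.succ
        simp at this ⊢
        linarith)
    have hj : Summable fun j : ℕ => ((j + 1 : ℕ) : ℝ) ^ (-(1 + ε)) :=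
      (summable_nat_add_iff 1).2 ((Real.summable_nat_rpow (p := -(1 + ε))).2 (by linarith))
    rw [← (dEquiv r).summable_iff]
    refine Summable.of_nonneg_of_le (fun _ => norm_nonneg _) (fun p => ?_)
      (hc.mul_of_nonneg hj (fun _ => norm_nonneg _) (fun _ => by positivity))
    show ‖hzTerm al s (dcons p).1‖ ≤ _
    rw [hzTerm_dcons, hzTerm_contractArgs, norm_mul, norm_mul, mul_right_comm]
    refine mul_le_mul_of_nonneg_right ?_ (norm_nonneg _)
    have hn : (1 : ℝ) ≤ p.1.1 0 := by exact_mod_cast p.1.2.2 0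
    have hp : (0 : ℝ) ≤ p.2 := Nat.cast_nonneg _
    have ha0 := (hal 0).1
    have ha1 := hal 1
    push_cast
    rw [norm_rpowC (by linarith), norm_rpowC (by linarith [ha1.1])]
    set y : ℝ := (p.1.1 0 : ℝ) + 1 + p.2 + al 0 with hy
    have hy0 : 0 < y := by linarith
    have e : (-(s 0)).re = -((s 0).re - (1 + ε)) + -(1 + ε) := by simp; ring
    have e2 : (-(s 0 + (-((1 + ε : ℝ) : ℂ)))).re = -((s 0).re - (1 + ε)) := by
      simp; ring
    push_cast at e2
    rw [e2, e, Real.rpow_add hy0]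
    refine mul_le_mul ?_ ?_ (by positivity) (Real.rpow_nonneg (by linarith [ha1.1]) _)
    · exact Real.rpow_le_rpow_of_nonpos (by linarith [ha1.1]) (by linarith [ha1.2]) (by linarith)
    · exact Real.rpow_le_rpow_of_nonpos (by linarith) (by linarith) (by linarith)

lemma summable_hzTerm_dcons {r : ℕ} {al : Fin (r + 2) → ℝ} (hal : ∀ i, al i ∈ Set.Ico (0 : ℝ) 1)
    {s : Fin (r + 2) → ℂ} (hs : s ∈ Ur (r + 2) 0) :
    Summable fun p : DTuple (r + 1) × ℕ => ‖hzTerm al s (dcons p).1‖ :=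
  ((dEquiv r).summable_iff (f := fun n : DTuple (r + 2) => ‖hzTerm al s n.1‖)).2
    (summable_hzTerm (r + 1) al hal s hs)

lemma tsum_hzTerm_dcons {r : ℕ} (al : Fin (r + 2) → ℝ) (s : Fin (r + 2) → ℂ) :
    ∑' p : DTuple (r + 1) × ℕ, hzTerm al s (dcons p).1 = multipleHurwitz al s :=
  (dEquiv r).tsum_eq (fun n : DTuple (r + 2) => hzTerm al s n.1)

/-! ### The function ξ -/

/-- The term of the series defining `ξ`: the first factor of the Hurwitz term is replaced by its
Euler-Maclaurin error at the base point `n₂ + α₂ + j`, where `n₁ = n₂ + 1 + j`. -/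
noncomputable def xiTerm {r : ℕ} (N : ℕ) (al : Fin (r + 2) → ℝ) (s : Fin (r + 2) → ℂ)
    (p : DTuple (r + 1) × ℕ) : ℂ :=
  emRem N (s 0) ((p.1.1 0 : ℝ) + al 1 + p.2) (al 1 - al 0)
    * hzTerm (fun i => al i.succ) (fun i => s i.succ) p.1.1

lemma one_le_base {r : ℕ} {al : Fin (r + 2) → ℝ} (hal : ∀ i, al i ∈ Set.Ico (0 : ℝ) 1)
    (p : DTuple (r + 1) × ℕ) : (1 : ℝ) ≤ (p.1.1 0 : ℝ) + al 1 + p.2 := by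
  have hn : (1 : ℝ) ≤ p.1.1 0 := by exact_mod_cast p.1.2.2 0
  have hp : (0 : ℝ) ≤ p.2 := Nat.cast_nonneg _
  linarith [(hal 1).1]

lemma differentiable_xiTerm {r : ℕ} (N : ℕ) {al : Fin (r + 2) → ℝ}
    (hal : ∀ i, al i ∈ Set.Ico (0 : ℝ) 1) (p : DTuple (r + 1) × ℕ) :
    Differentiable ℂ (fun s => xiTerm N al s p) := by
  unfold xiTerm
  refine Differentiable.mul ?_ ?_
  · exact (differentiable_emRem N (by linarith [one_le_base hal p]) _).comp
      (differentiable_apply (0 : Fin (r + 2)))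
  · unfold hzTerm rpowC
    fun_prop

lemma norm_hzTerm_mono {r : ℕ} {al : Fin r → ℝ} (hal : ∀ i, al i ∈ Set.Ico (0 : ℝ) 1)
    {s t : Fin r → ℂ} (h : ∀ i, (t i).re ≤ (s i).re) (n : DTuple r) :
    ‖hzTerm al s n.1‖ ≤ ‖hzTerm al t n.1‖ := by
  rw [hzTerm, hzTerm, norm_prod, norm_prod]
  refine Finset.prod_le_prod (fun _ _ => norm_nonneg _) fun i _ => ?_
  have hn : (1 : ℝ) ≤ n.1 i := by exact_mod_cast n.2.2 i
  have ha := (hal i).1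
  rw [norm_rpowC (by linarith), norm_rpowC (by linarith)]
  refine Real.rpow_le_rpow_of_exponent_le (by linarith) ?_
  simpa using h i

/-- The point `c`, moved by `-ρ` in every coordinate and by `N + 1` in the first one. -/
noncomputable def shiftPt {r : ℕ} (N : ℕ) (c : Fin (r + 2) → ℂ) (ρ : ℝ) : Fin (r + 2) → ℂ :=
  fun i => c i - ρ + if i = 0 then (N + 1 : ℂ) else 0

lemma isOpen_Ur (r : ℕ) (m : ℤ) : IsOpen (Ur r m) := by
  simp only [Ur, Set.ofPred_forall]
  refine isOpen_iInter_of_finite fun i => ?_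
  exact isOpen_lt continuous_const (by fun_prop)

lemma shiftPt_zero_mem {r N : ℕ} {c : Fin (r + 2) → ℂ} (hc : c ∈ Ur (r + 2) (N + 1)) :
    shiftPt N c 0 ∈ Ur (r + 2) 0 := by
  intro i
  have := hc i
  have h0 : (0 : Fin (r + 2)) ∈ Finset.Iic i := by simp
  simp only [shiftPt, Complex.ofReal_zero, sub_zero, Finset.sum_add_distrib, Finset.sum_ite_eq',
    h0, if_true, Complex.add_re, Complex.natCast_re, Complex.one_re, Int.cast_zero]
  push_cast at this
  linarith

/-- On the ball of radius `ρ` about `c`, the terms of `ξ` are dominated by the Hurwitz terms at the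
single point `shiftPt N c ρ`. -/
lemma xiTerm_bound {r : ℕ} (N : ℕ) {al : Fin (r + 2) → ℝ}
    (hal : ∀ i, al i ∈ Set.Ico (0 : ℝ) 1) (c : Fin (r + 2) → ℂ) {ρ : ℝ} (hρ : 0 < ρ) :
    ∃ C, ∀ s ∈ Metric.ball c ρ, ∀ p : DTuple (r + 1) × ℕ,
      ‖xiTerm N al s p‖ ≤ C * ‖hzTerm al (shiftPt N c ρ) (dcons p).1‖ := by
  obtain ⟨C, hC, h⟩ := exists_norm_emRem_le N (‖c‖ + ρ) (by positivity)
  refine ⟨C, fun s hs p => ?_⟩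
  have hs' := hs
  rw [Metric.mem_ball, dist_pi_lt_iff hρ] at hs'
  have hre : ∀ i, (c i).re - ρ ≤ (s i).re := fun i => by
    have h1 := (Complex.abs_re_le_norm (s i - c i)).trans (by simpa [dist_eq_norm] using (hs' i).le)
    rw [abs_le, Complex.sub_re] at h1
    linarith [h1.1]
  have hz : ‖s 0‖ ≤ ‖c‖ + ρ := by
    have h1 := (hs' 0).le
    rw [dist_eq_norm] at h1
    calc ‖s 0‖ = ‖c 0 + (s 0 - c 0)‖ := by ring_nf
      _ ≤ ‖c 0‖ + ‖s 0 - c 0‖ := norm_add_le _ _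
      _ ≤ _ := add_le_add (norm_le_pi_norm c 0) h1
  have hx := one_le_base hal p
  have h0 := hal 0
  have h1 := hal 1
  have he := h (s 0) hz _ hx (al 1 - al 0) ⟨by linarith [h0.2, h1.1], by linarith [h0.1, h1.2]⟩
  rw [hzTerm_dcons, xiTerm, norm_mul, norm_mul, ← mul_assoc]
  have hy : ((p.1.1 0 : ℝ) + al 1 + p.2) + 1 - (al 1 - al 0)
      = ((p.1.1 0 + 1 + p.2 : ℕ) : ℝ) + al 0 := by push_cast; ring
  have hn : (0 : ℝ) ≤ p.1.1 0 := Nat.cast_nonneg _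
  have hp : (0 : ℝ) ≤ p.2 := Nat.cast_nonneg _
  have hy1 : 1 ≤ ((p.1.1 0 + 1 + p.2 : ℕ) : ℝ) + al 0 := by push_cast; linarith [h0.1]
  rw [hy] at he
  refine mul_le_mul ?_ ?_ (norm_nonneg _) (by positivity)
  · refine he.trans (mul_le_mul_of_nonneg_left ?_ hC)
    rw [norm_rpowC (by linarith)]
    refine Real.rpow_le_rpow_of_exponent_le hy1 ?_
    simp [shiftPt]
    linarith [hre 0]
  · refine norm_hzTerm_mono (fun i => hal i.succ) (fun i => ?_) p.1
    simpa [shiftPt] using hre i.succ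

lemma exists_shift {r N : ℕ} {c : Fin (r + 2) → ℂ} (hc : c ∈ Ur (r + 2) (N + 1)) :
    ∃ ρ : ℝ, 0 < ρ ∧ shiftPt N c ρ ∈ Ur (r + 2) 0 := by
  have hcont : Continuous (shiftPt N c) := by
    unfold shiftPt
    fun_prop
  have h : ∀ᶠ ρ in nhdsWithin (0 : ℝ) (Set.Ioi 0), shiftPt N c ρ ∈ Ur (r + 2) 0 :=
    Filter.Eventually.filter_mono nhdsWithin_le_nhds
      (hcont.continuousAt.eventually_mem ((isOpen_Ur _ _).mem_nhds (shiftPt_zero_mem hc)))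
  obtain ⟨ρ, h1, h2⟩ := (h.and self_mem_nhdsWithin).exists
  exact ⟨ρ, h2, h1⟩

/-- On a small ball the terms of `ξ` are dominated by a convergent series independent of `s`. -/
lemma xiTerm_dominated {r : ℕ} (N : ℕ) {al : Fin (r + 2) → ℝ}
    (hal : ∀ i, al i ∈ Set.Ico (0 : ℝ) 1) {c : Fin (r + 2) → ℂ} (hc : c ∈ Ur (r + 2) (N + 1)) :
    ∃ ρ : ℝ, 0 < ρ ∧ ∃ u : DTuple (r + 1) × ℕ → ℝ, Summable u ∧
      ∀ s ∈ Metric.ball c ρ, ∀ p, ‖xiTerm N al s p‖ ≤ u p := by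
  obtain ⟨ρ, hρ, hmem⟩ := exists_shift hc
  obtain ⟨C, hC⟩ := xiTerm_bound N hal c hρ
  exact ⟨ρ, hρ, _, (summable_hzTerm_dcons hal hmem).mul_left C,
    fun s hs p => hC s hs p⟩

lemma analyticOnNhd_xi {r : ℕ} (N : ℕ) {al : Fin (r + 2) → ℝ}
    (hal : ∀ i, al i ∈ Set.Ico (0 : ℝ) 1) :
    AnalyticOnNhd ℂ (fun s => ∑' p, xiTerm N al s p) (Ur (r + 2) (N + 1)) := by
  intro c hc
  obtain ⟨ρ, hρ, u, hu, hle⟩ := xiTerm_dominated N hal hc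
  refine osgood _ (Metric.ball c ρ) Metric.isOpen_ball ?_ ?_ c (Metric.mem_ball_self hρ)
  · exact continuousOn_tsum (fun p => (differentiable_xiTerm N hal p).continuous.continuousOn) hu
      fun p s hs => hle s hs p
  · intro s hs i
    have hup : Differentiable ℂ (fun z : ℂ => Function.update s i z) := by
      rw [differentiable_pi]
      intro j
      by_cases h : j = i
      · subst h; simp
      · simp [Function.update_of_ne h]
    have hopen : IsOpen {z : ℂ | Function.update s i z ∈ Metric.ball c ρ} :=
      Metric.isOpen_ball.preimage hup.continuous
    refine (Complex.differentiableOn_tsum_of_summable_norm hu (fun p => ?_) hopen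
      (fun p z hz => hle _ hz p)).differentiableAt (hopen.mem_nhds ?_)
    · exact ((differentiable_xiTerm N hal p).comp hup).differentiableOn
    · simpa using hs

lemma summable_xiTerm {r : ℕ} (N : ℕ) {al : Fin (r + 2) → ℝ}
    (hal : ∀ i, al i ∈ Set.Ico (0 : ℝ) 1) {s : Fin (r + 2) → ℂ} (hs : s ∈ Ur (r + 2) 0) :
    Summable fun p => xiTerm N al s p := by
  have hs' : s ∈ Ur (r + 2) (N + 1) := fun i => by
    have := hs i
    have hN : (0 : ℝ) ≤ N := Nat.cast_nonneg N
    push_cast at this ⊢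
    linarith
  obtain ⟨ρ, hρ, u, hu, hle⟩ := xiTerm_dominated N hal hs'
  exact Summable.of_norm_bounded hu fun p => hle s (Metric.mem_ball_self hρ) p

lemma hzTerm_sub_xiTerm {r : ℕ} (N : ℕ) {al : Fin (r + 2) → ℝ}
    (hal : ∀ i, al i ∈ Set.Ico (0 : ℝ) 1) {s : Fin (r + 2) → ℂ} (hs : s 0 ≠ 1)
    (p : DTuple (r + 1) × ℕ) :
    hzTerm al s (dcons p).1 - xiTerm N al s p
      = (emMain N (s 0) (al 1 - al 0) ((p.1.1 0 : ℝ) + al 1 + p.2)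
          - emMain N (s 0) (al 1 - al 0) ((p.1.1 0 : ℝ) + al 1 + (p.2 + 1 : ℕ)))
        * hzTerm (fun i => al i.succ) (fun i => s i.succ) p.1.1 := by
  have h := rpowC_sub_emRem N hs (x := (p.1.1 0 : ℝ) + al 1 + p.2)
    (by linarith [one_le_base hal p]) (al 1 - al 0)
  have hy : ((p.1.1 0 : ℝ) + al 1 + p.2) + 1 - (al 1 - al 0)
      = ((p.1.1 0 + 1 + p.2 : ℕ) : ℝ) + al 0 := by push_cast; ring
  rw [hy] at h
  rw [hzTerm_dcons, xiTerm, ← sub_mul, Nat.cast_succ, ← add_assoc, ← h]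

/-- Summing over the largest entry, the main parts telescope. -/
lemma tsum_hzTerm_sub_xiTerm {r : ℕ} (N : ℕ) {al : Fin (r + 2) → ℝ}
    (hal : ∀ i, al i ∈ Set.Ico (0 : ℝ) 1) {s : Fin (r + 2) → ℂ} (hs : s ∈ Ur (r + 2) 0)
    (h1 : 1 < (s 0).re) :
    ∑' p, (hzTerm al s (dcons p).1 - xiTerm N al s p)
      = ∑' n : DTuple (r + 1), emMain N (s 0) (al 1 - al 0) ((n.1 0 : ℝ) + al 1)
          * hzTerm (fun i => al i.succ) (fun i => s i.succ) n.1 := by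
  have hne : s 0 ≠ 1 := fun h => by simp [h] at h1
  have hA := (summable_hzTerm_dcons hal hs).of_norm
  have hS := hA.sub (summable_xiTerm N hal hs)
  rw [hS.tsum_prod]
  refine tsum_congr fun n => ?_
  have hn := hS.prod_factor n
  refine tendsto_nhds_unique hn.hasSum.tendsto_sum_nat ?_
  simp only [hzTerm_sub_xiTerm N hal hne, ← Finset.sum_mul]
  refine Filter.Tendsto.mul_const _ ?_
  simp only [Finset.sum_range_sub' (fun j : ℕ =>
    emMain N (s 0) (al 1 - al 0) ((n.1 0 : ℝ) + al 1 + j))]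
  simpa using (tendsto_emMain N h1 (al 1 - al 0) ((n.1 0 : ℝ) + al 1)).const_sub
    (emMain N (s 0) (al 1 - al 0) ((n.1 0 : ℝ) + al 1))

/-- Summing the main parts over `n₂ > ⋯ > n_r` gives the explicit depth `r - 1` terms. -/
lemma tsum_emMain {r : ℕ} (N : ℕ) {al : Fin (r + 2) → ℝ}
    (hal : ∀ i, al i ∈ Set.Ico (0 : ℝ) 1) {s : Fin (r + 2) → ℂ} (hs : s ∈ Ur (r + 2) 0) :
    ∑' n : DTuple (r + 1), emMain N (s 0) (al 1 - al 0) ((n.1 0 : ℝ) + al 1)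
          * hzTerm (fun i => al i.succ) (fun i => s i.succ) n.1
      = (s 0 - 1)⁻¹ * multipleHurwitz (fun i => al i.succ) (contractArgs s (-1))
        + ∑ k ∈ Finset.range N,
            (∏ j ∈ Finset.range k, (s 0 + (j : ℂ))) / (Nat.factorial (k + 1))
              * (bernoulliFun (k + 1) (al 1 - al 0) : ℂ)
              * multipleHurwitz (fun i => al i.succ) (contractArgs s (k : ℂ)) := by
  have hsum : ∀ c : ℂ, -1 ≤ c.re → HasSum
      (fun n : DTuple (r + 1) => hzTerm (fun i => al i.succ) (contractArgs s c) n.1)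
      (multipleHurwitz (fun i => al i.succ) (contractArgs s c)) := fun c hc =>
    (summable_hzTerm _ _ (fun i => hal i.succ) _ (contractArgs_mem' hs hc)).of_norm.hasSum
  refine (HasSum.congr_fun ((hsum (-1) (by simp)).mul_left (s 0 - 1)⁻¹ |>.add
    (hasSum_sum (s := Finset.range N) fun k _ => (hsum k (by
      simp only [Complex.natCast_re]
      have : (0 : ℝ) ≤ k := Nat.cast_nonneg k
      linarith)).mul_left
      ((∏ j ∈ Finset.range k, (s 0 + (j : ℂ))) / (Nat.factorial (k + 1))
        * (bernoulliFun (k + 1) (al 1 - al 0) : ℂ)))) fun n => ?_).tsum_eq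
  simp only [hzTerm_contractArgs, emMain]
  rw [add_mul, Finset.sum_mul]
  simp only [mul_assoc]

/-- **The truncated identity (5.4).** For `r ≥ 2`, `q ≥ 1` there is a function `ξ`
analytic on `U_r(q)` such that on `U_r`:
`ζ_r(s;α) = (s_1−1)⁻¹ ζ_{r−1}(s_1+s_2−1,s_3,…;α_2,…)
 + ∑_{k=0}^{q−2} [s_1⋯(s_1+k−1)/(k+1)!] B_{k+1}(α_2−α_1) ζ_{r−1}(s_1+s_2+k,s_3,…;α_2,…)
 + ξ(s)`, all multiple Hurwitz zeta values being given by absolutely convergent series. -/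
theorem stmt_12 (r q₀ : ℕ) (al : Fin (r + 2) → ℝ) (hal : ∀ i, al i ∈ Set.Ico (0 : ℝ) 1) :
    ∃ ξ : (Fin (r + 2) → ℂ) → ℂ,
      AnalyticOnNhd ℂ ξ (Ur (r + 2) (q₀ + 1)) ∧
      (∀ s ∈ Ur (r + 2) 0,
        (Summable fun n : DTuple (r + 2) => ‖hzTerm al s n.1‖) ∧
        (Summable fun n : DTuple (r + 1) =>
          ‖hzTerm (fun i => al i.succ) (contractArgs s (-1)) n.1‖) ∧
        (∀ k ∈ Finset.range q₀, Summable fun n : DTuple (r + 1) =>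
          ‖hzTerm (fun i => al i.succ) (contractArgs s (k : ℂ)) n.1‖)) ∧
      ∀ s ∈ Ur (r + 2) 0,
        multipleHurwitz al s
          = (s 0 - 1)⁻¹ * multipleHurwitz (fun i => al i.succ) (contractArgs s (-1))
            + (∑ k ∈ Finset.range q₀,
                (∏ j ∈ Finset.range k, (s 0 + (j : ℂ))) / (Nat.factorial (k + 1))
                  * ((Polynomial.aeval (al 1 - al 0) (Polynomial.bernoulli (k + 1)) : ℝ) : ℂ)
                  * multipleHurwitz (fun i => al i.succ) (contractArgs s (k : ℂ)))
            + ξ s := by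
  refine ⟨fun s => ∑' p, xiTerm q₀ al s p, analyticOnNhd_xi q₀ hal, ?_, ?_⟩
  · intro s hs
    refine ⟨summable_hzTerm _ al hal s hs,
      summable_hzTerm _ _ (fun i => hal i.succ) _ (contractArgs_mem' hs (by simp)),
      fun k _ => summable_hzTerm _ _ (fun i => hal i.succ) _ (contractArgs_mem' hs ?_)⟩
    have : (0 : ℝ) ≤ k := Nat.cast_nonneg k
    simp only [Complex.natCast_re]
    linarith
  · intro s hs
    have h1 : 1 < (s 0).re := by
      have h0 := hs 0
      have hI : Finset.Iic (0 : Fin (r + 2)) = {0} := by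
        ext j; simp
      simpa [hI] using h0
    have hB : ∀ k : ℕ, (Polynomial.aeval (al 1 - al 0) (Polynomial.bernoulli (k + 1)) : ℝ)
        = bernoulliFun (k + 1) (al 1 - al 0) := fun k => by
      simp [bernoulliFun, Polynomial.aeval_def, Polynomial.eval_map]
    have hA := (summable_hzTerm_dcons hal hs).of_norm
    have hX := summable_xiTerm q₀ hal hs
    simp only [hB]
    rw [← tsum_emMain q₀ hal hs, ← tsum_hzTerm_sub_xiTerm q₀ hal hs h1, hA.tsum_sub hX,
      sub_add_cancel, tsum_hzTerm_dcons]
end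

section
/- Let r ≥ 2 be an integer and α_1,…,α_r ∈ [0,1). Fix complex numbers s_2,…,s_r with Re(s_2+⋯+s_i) > i−1 for all 2 ≤ i ≤ r. Then (s_1−1)·ζ_r(s_1,s_2,…,s_r; α_1,…,α_r) tends to ζ_{r−1}(s_2,…,s_r; α_2,…,α_r) as s_1 → 1 within the half-plane {s_1 ∈ ℂ : Re(s_1) > 1}. (For such s_1, the point (s_1,…,s_r) lies in U_r, so ζ_r is given by its absolutely convergent series; likewise (s_2,…,s_r) ∈ U_{r−1}.) -/
/-!
Write `n = (m + 1 + k, n')` with `n' = (m, …)` a strictly decreasing tuple of length one less and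
`k ≥ 0`. The series for `(s₁ - 1) ζ_r` then becomes a sum over `n'` of the term of `ζ_{r-1}` at
`n'` times `(s₁ - 1) ∑ₖ (a + k)^{-s₁}`, where `a = m + 1 + α₁ ≥ 1`. Comparing the inner sum with a
telescoping series (`hurwitzTail_norm_sub_le`) gives, for `Re s₁ > 1`,
`(s₁ - 1) ∑ₖ (a + k)^{-s₁} = a^{1 - s₁} + O(|s₁ - 1| |s₁|)` with a constant independent of `a`.
Hence the inner factor tends to `1` for each `n'`, and it is bounded uniformly in `n'` and in `s₁`
near `1`. The uniformity holds in the whole half-plane, including tangential approach to `1`, where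
a bound of the sum by absolute values would fail. Dominated convergence then concludes.

Absolute convergence of `ζ_{r-1}` on `U_{r-1}` (`summable_prod_rpow`) is shown by induction on the
depth: a small part of the excess of the first exponent over `1` is kept to make the sum over `k`
converge, and the rest is transferred to the next exponent.
-/


open Complex

/-! ### Decomposition of strictly decreasing tuples -/

/-- Prepending an entry: a strictly decreasing tuple of length `r + 2` is the same as its tail `n`
together with the gap `k`, the first entry being `n 0 + 1 + k`. -/
def DTuple.consEquiv (r : ℕ) : DTuple (r + 1) × ℕ ≃ DTuple (r + 2) where
  toFun p := ⟨Fin.cons (p.1.1 0 + 1 + p.2) p.1.1, by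
    constructor
    · rw [Fin.strictAnti_iff_succ_lt]
      intro i
      refine Fin.cases ?_ (fun j => ?_) i
      · simp only [Fin.cons_succ, Fin.castSucc_zero, Fin.cons_zero]
        omega
      · rw [Fin.cons_succ, ← Fin.succ_castSucc, Fin.cons_succ]
        exact p.1.2.1 Fin.castSucc_lt_succ
    · intro i
      refine Fin.cases ?_ (fun j => ?_) i
      · simp only [Fin.cons_zero]
        omega
      · simpa using p.1.2.2 j⟩
  invFun n := (⟨fun i => n.1 i.succ, fun i j h => n.2.1 (Fin.succ_lt_succ_iff.2 h),
    fun i => n.2.2 _⟩, n.1 0 - n.1 (Fin.succ 0) - 1)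
  left_inv p := by
    ext1
    · apply Subtype.ext
      funext i
      simp
    · simp only [Fin.cons_zero, Fin.cons_succ]
      omega
  right_inv n := by
    apply Subtype.ext
    funext i
    refine Fin.cases ?_ (fun j => ?_) i
    · have := n.2.1 (Fin.succ_pos (0 : Fin (r + 1)))
      simp only [Fin.cons_zero]
      omega
    · simp

lemma DTuple.consEquiv_val (r : ℕ) (p : DTuple (r + 1) × ℕ) :
    (DTuple.consEquiv r p).1 = Fin.cons (p.1.1 0 + 1 + p.2) p.1.1 := rfl

/-! ### Absolute convergence -/

lemma sum_Iic_succ {r : ℕ} (σ : Fin (r + 2) → ℝ) (i : Fin (r + 1)) :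
    ∑ j ∈ Finset.Iic i.succ, σ j = σ 0 + ∑ j ∈ Finset.Iic i, σ j.succ := by
  have h : Finset.Iic i.succ
      = Finset.cons 0 ((Finset.Iic i).map (Fin.succEmb _)) (by simp) := by
    ext j
    refine Fin.cases ?_ (fun j => ?_) j <;> simp
  rw [h, Finset.sum_cons, Finset.sum_map]
  rfl

lemma summable_nat_add_one_rpow {σ : ℝ} (h : 1 < σ) :
    Summable (fun k : ℕ => ((k : ℝ) + 1) ^ (-σ)) := by
  have := (summable_nat_add_iff 1).2 (Real.summable_nat_rpow.2 (neg_lt_neg h))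
  simpa using this

/-- Absolute convergence of the multiple zeta series with real exponents on `U_r`. -/
lemma summable_prod_rpow (r : ℕ) : ∀ σ : Fin (r + 1) → ℝ,
    (∀ i : Fin (r + 1), ((i : ℕ) + 1 : ℝ) < ∑ j ∈ Finset.Iic i, σ j) →
    Summable (fun n : DTuple (r + 1) => ∏ i, (n.1 i : ℝ) ^ (-σ i)) := by
  induction r with
  | zero =>
    intro σ h
    have h0 : 1 < σ 0 := by
      have h0 := h 0
      have e : Finset.Iic (0 : Fin 1) = {0} := by decide
      rw [e] at h0
      simpa using h0
    have hinj : Function.Injective (fun n : DTuple 1 => n.1 0) := by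
      intro m n hmn
      apply Subtype.ext
      funext i
      rw [Subsingleton.elim i 0]
      exact hmn
    simpa [Function.comp_def] using
      (Real.summable_nat_rpow.2 (neg_lt_neg h0)).comp_injective hinj
  | succ r ih =>
    intro σ h
    obtain ⟨δ, hδ, hδi⟩ : ∃ δ : ℝ, 0 < δ ∧ ∀ i : Fin (r + 2),
        ((i : ℕ) + 1 : ℝ) + δ < ∑ j ∈ Finset.Iic i, σ j := by
      have : ∀ᶠ δ in nhdsWithin (0 : ℝ) (Set.Ioi 0), ∀ i : Fin (r + 2),
          ((i : ℕ) + 1 : ℝ) + δ < ∑ j ∈ Finset.Iic i, σ j := by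
        rw [Filter.eventually_all]
        intro i
        apply nhdsWithin_le_nhds
        have hc : Filter.Tendsto (fun δ : ℝ => ((i : ℕ) + 1 : ℝ) + δ) (nhds 0)
            (nhds (((i : ℕ) + 1 : ℝ) + 0)) := by
          apply Continuous.tendsto
          fun_prop
        apply hc.eventually_lt_const
        simpa using h i
      obtain ⟨δ, h1, h2⟩ := (this.and self_mem_nhdsWithin).exists
      exact ⟨δ, h2, h1⟩
    have h0 : 1 + δ < σ 0 := by
      have h0 := hδi 0
      have e : Finset.Iic (0 : Fin (r + 2)) = {0} := by
        ext j
        simp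
      rw [e] at h0
      simpa using h0
    -- The part `σ 0 - 1 - δ` of the first exponent moves to the second one.
    set τ : Fin (r + 1) → ℝ := fun i => σ i.succ + if i = 0 then σ 0 - 1 - δ else 0 with hτ
    have hsum := ih τ (by
      intro i
      have h1 := hδi i.succ
      rw [sum_Iic_succ] at h1
      have h2 : ∑ j ∈ Finset.Iic i, τ j
          = ∑ j ∈ Finset.Iic i, σ j.succ + (σ 0 - 1 - δ) := by
        simp [hτ, Finset.sum_add_distrib]
      rw [h2]
      push_cast [Fin.val_succ] at h1
      linarith)
    rw [← (DTuple.consEquiv r).summable_iff]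
    refine Summable.of_nonneg_of_le (fun p => ?_) (fun p => ?_)
      (hsum.mul_of_nonneg (summable_nat_add_one_rpow (σ := 1 + δ) (by linarith))
        (fun n => Finset.prod_nonneg fun i _ => Real.rpow_nonneg (Nat.cast_nonneg _) _)
        (fun k => by positivity))
    · exact Finset.prod_nonneg fun i _ => Real.rpow_nonneg (Nat.cast_nonneg _) _
    · obtain ⟨n, k⟩ := p
      have hn : (0 : ℝ) < n.1 0 := by exact_mod_cast n.2.2 0
      simp only [Function.comp_apply, DTuple.consEquiv_val]
      rw [Fin.prod_univ_succ]
      simp only [Fin.cons_zero, Fin.cons_succ]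
      have hprod : ∏ i, (n.1 i : ℝ) ^ (-τ i)
          = (n.1 0 : ℝ) ^ (-(σ 0 - 1 - δ)) * ∏ i, (n.1 i : ℝ) ^ (-σ i.succ) := by
        rw [Fin.prod_univ_succ, Fin.prod_univ_succ (f := fun i => (n.1 i : ℝ) ^ (-σ i.succ)),
          ← mul_assoc, ← Real.rpow_add hn]
        congr 1
        · congr 1
          simp [hτ]
        · simp [hτ]
      rw [hprod]
      push_cast
      have hb : (0 : ℝ) < (n.1 0 : ℝ) + 1 + k := by positivity
      have e1 : ((n.1 0 : ℝ) + 1 + k) ^ (-σ 0)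
          = ((n.1 0 : ℝ) + 1 + k) ^ (-(σ 0 - 1 - δ)) * ((n.1 0 : ℝ) + 1 + k) ^ (-(1 + δ)) := by
        rw [← Real.rpow_add hb]
        congr 1
        ring
      have e2 : ((n.1 0 : ℝ) + 1 + k) ^ (-(σ 0 - 1 - δ)) ≤ (n.1 0 : ℝ) ^ (-(σ 0 - 1 - δ)) :=
        Real.rpow_le_rpow_of_nonpos hn (by linarith [(Nat.cast_nonneg k : (0 : ℝ) ≤ k)])
          (by linarith)
      have e3 : ((n.1 0 : ℝ) + 1 + k) ^ (-(1 + δ)) ≤ ((k : ℝ) + 1) ^ (-(1 + δ)) :=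
        Real.rpow_le_rpow_of_nonpos (by positivity) (by linarith) (by linarith)
      have hP : 0 ≤ ∏ i, (n.1 i : ℝ) ^ (-σ i.succ) :=
        Finset.prod_nonneg fun i _ => Real.rpow_nonneg (Nat.cast_nonneg _) _
      calc ((n.1 0 : ℝ) + 1 + k) ^ (-σ 0) * ∏ i, (n.1 i : ℝ) ^ (-σ i.succ)
          ≤ ((n.1 0 : ℝ) ^ (-(σ 0 - 1 - δ)) * ((k : ℝ) + 1) ^ (-(1 + δ)))
              * ∏ i, (n.1 i : ℝ) ^ (-σ i.succ) := by
            rw [e1]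
            gcongr
        _ = _ := by ring

lemma norm_rpowC_s13 {b : ℝ} (hb : 0 < b) (z : ℂ) : ‖rpowC b z‖ = b ^ z.re := by
  rw [rpowC, Complex.norm_exp, Complex.re_mul_ofReal, Real.rpow_def_of_pos hb, mul_comm]

lemma add_rpow_le {n : ℕ} (hn : 0 < n) {α : ℝ} (hα : α ∈ Set.Ico (0 : ℝ) 1) (σ : ℝ) :
    ((n : ℝ) + α) ^ σ ≤ (2 : ℝ) ^ |σ| * (n : ℝ) ^ σ := by
  have hn1 : (1 : ℝ) ≤ n := by exact_mod_cast hn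
  rcases le_total 0 σ with h | h
  · rw [abs_of_nonneg h, ← Real.mul_rpow (by norm_num) (by linarith)]
    exact Real.rpow_le_rpow (by linarith [hα.1]) (by linarith [hα.2]) h
  · calc ((n : ℝ) + α) ^ σ ≤ (n : ℝ) ^ σ :=
          Real.rpow_le_rpow_of_nonpos (by linarith) (by linarith [hα.1]) h
      _ ≤ _ := le_mul_of_one_le_left (by positivity)
          (Real.one_le_rpow (by norm_num) (abs_nonneg _))

lemma summable_norm_hzTerm (r : ℕ) (al : Fin (r + 1) → ℝ) (hal : ∀ i, al i ∈ Set.Ico (0 : ℝ) 1)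
    (t : Fin (r + 1) → ℂ) (ht : t ∈ Ur (r + 1) 0) :
    Summable (fun n : DTuple (r + 1) => ‖hzTerm al t n.1‖) := by
  have h := summable_prod_rpow r (fun i => (t i).re) (by
    intro i
    simpa using ht i)
  refine Summable.of_nonneg_of_le (fun n => norm_nonneg _) (fun n => ?_)
    (h.mul_left (∏ i, (2 : ℝ) ^ |(-(t i)).re|))
  rw [hzTerm, norm_prod, ← Finset.prod_mul_distrib]
  refine Finset.prod_le_prod (fun i _ => norm_nonneg _) (fun i _ => ?_)
  have hn := n.2.2 i
  have hn' : (0 : ℝ) < n.1 i := by exact_mod_cast hn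
  rw [norm_rpowC_s13 (by linarith [(hal i).1])]
  exact add_rpow_le hn (hal i) _

/-! ### The one-variable Hurwitz series near `s = 1` -/

lemma hasDerivAt_rpowC_s13 (z : ℂ) {x : ℝ} (hx : 0 < x) :
    HasDerivAt (fun y : ℝ => rpowC y z) (z * rpowC x (z - 1)) x := by
  have h1 : HasDerivAt (fun y : ℝ => z * ((Real.log y : ℝ) : ℂ)) (z * ((x⁻¹ : ℝ) : ℂ)) x :=
    ((Real.hasDerivAt_log hx.ne').ofReal_comp).const_mul z
  have h2 := h1.cexp
  have : ((x⁻¹ : ℝ) : ℂ) = Complex.exp (-(Real.log x : ℂ)) := by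
    rw [← Complex.ofReal_neg, ← Complex.ofReal_exp, Real.exp_neg, Real.exp_log hx]
  refine h2.congr_deriv ?_
  rw [this, rpowC, sub_mul, one_mul, sub_eq_add_neg, Complex.exp_add]
  ring

/-- For `Re s ≥ 1`, the term `(s - 1) b^{-s}` differs from the telescoping difference
`b^{1-s} - (b+1)^{1-s} = (s - 1) ∫_b^{b+1} x^{-s} dx` by at most `|s - 1| |s| b^{-2}`. -/
lemma norm_term_sub_le {s : ℂ} (hs : 1 ≤ s.re) {b : ℝ} (hb : 1 ≤ b) :
    ‖(s - 1) * rpowC b (-s) - (rpowC b (1 - s) - rpowC (b + 1) (1 - s))‖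
      ≤ ‖s - 1‖ * ‖s‖ * (b ^ 2)⁻¹ := by
  have hb0 : 0 < b := by linarith
  have key : ∀ x ∈ Set.Icc b (b + 1), ‖rpowC x (-s) - rpowC b (-s)‖ ≤ ‖s‖ * (b ^ 2)⁻¹ := by
    intro x hx
    have h := norm_image_sub_le_of_norm_deriv_le_segment' (f := fun y : ℝ => rpowC y (-s))
      (f' := fun y => -s * rpowC y (-s - 1)) (a := b) (b := b + 1) (C := ‖s‖ * (b ^ 2)⁻¹)
      (fun y hy => (hasDerivAt_rpowC_s13 (-s) (by linarith [hy.1])).hasDerivWithinAt)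
      (fun y hy => by
        have hy0 : 1 ≤ y := by linarith [hy.1]
        rw [norm_mul, norm_neg, norm_rpowC_s13 (by linarith)]
        gcongr
        calc y ^ (-s - 1).re ≤ y ^ (-2 : ℝ) := by
              apply Real.rpow_le_rpow_of_exponent_le hy0
              simp
              linarith
          _ ≤ b ^ (-2 : ℝ) := Real.rpow_le_rpow_of_nonpos hb0 hy.1 (by norm_num)
          _ = (b ^ 2)⁻¹ := by
              rw [Real.rpow_neg hb0.le]
              norm_num) x hx
    refine h.trans (mul_le_of_le_one_right (by positivity) (by linarith [hx.2]))
  -- The increment over `[b, b + 1]` of this auxiliary function is the quantity to be bounded.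
  have h := norm_image_sub_le_of_norm_deriv_le_segment'
    (f := fun y : ℝ => (s - 1) * rpowC b (-s) * (y : ℂ) + rpowC y (1 - s))
    (f' := fun y => (s - 1) * rpowC b (-s) * 1 + (1 - s) * rpowC y (1 - s - 1))
    (a := b) (b := b + 1) (C := ‖s - 1‖ * ‖s‖ * (b ^ 2)⁻¹)
    (fun y hy => (((hasDerivAt_id y).ofReal_comp.const_mul _).add
      (hasDerivAt_rpowC_s13 (1 - s) (by linarith [hy.1]))).hasDerivWithinAt)
    (fun y hy => by
      have e : (s - 1) * rpowC b (-s) * 1 + (1 - s) * rpowC y (1 - s - 1)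
          = -((s - 1) * (rpowC y (-s) - rpowC b (-s))) := by
        rw [show (1 : ℂ) - s - 1 = -s by ring]
        ring
      rw [e, norm_neg, norm_mul, mul_assoc]
      gcongr
      exact key y ⟨hy.1, hy.2.le⟩) (b + 1) ⟨by linarith, le_rfl⟩
  rw [add_sub_cancel_left, mul_one] at h
  refine le_of_eq_of_le (congrArg _ ?_) h
  push_cast
  ring

lemma tendsto_rpowC_atTop {s : ℂ} (hs : 1 < s.re) {a : ℝ} (ha : 1 ≤ a) :
    Filter.Tendsto (fun k : ℕ => rpowC (a + k) (1 - s)) Filter.atTop (nhds 0) := by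
  rw [tendsto_zero_iff_norm_tendsto_zero]
  have h1 : Filter.Tendsto (fun k : ℕ => (a + (k : ℝ)) ^ (-(s.re - 1))) Filter.atTop (nhds 0) :=
    (tendsto_rpow_neg_atTop (by linarith)).comp
      (Filter.tendsto_atTop_add_const_left _ a tendsto_natCast_atTop_atTop)
  refine h1.congr (fun k => ?_)
  rw [norm_rpowC_s13 (by positivity)]
  simp

lemma norm_rpowC_add_le {s : ℂ} (hs : 1 < s.re) {a : ℝ} (ha : 1 ≤ a) (k : ℕ) :
    ‖rpowC (a + k) (-s)‖ ≤ ((k : ℝ) + 1) ^ (-s.re) := by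
  rw [norm_rpowC_s13 (by positivity), Complex.neg_re]
  exact Real.rpow_le_rpow_of_nonpos (by positivity) (by linarith) (by linarith)

lemma summable_rpowC {s : ℂ} (hs : 1 < s.re) {a : ℝ} (ha : 1 ≤ a) :
    Summable (fun k : ℕ => rpowC (a + k) (-s)) :=
  Summable.of_norm_bounded (summable_nat_add_one_rpow hs) (norm_rpowC_add_le hs ha)

lemma summable_inv_sq : Summable (fun k : ℕ => (((k : ℝ) + 1) ^ 2)⁻¹) := by
  have := (summable_nat_add_iff 1).2 (Real.summable_nat_pow_inv.2 (by norm_num : 1 < 2))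
  simpa using this

/-- The one-variable Hurwitz series, multiplied by `s - 1`, is `a^{1-s}` up to an error
`O(|s - 1| |s|)` that is uniform in `a ≥ 1` and in the half-plane `Re s > 1`. -/
lemma hurwitzTail_norm_sub_le {s : ℂ} (hs : 1 < s.re) {a : ℝ} (ha : 1 ≤ a) :
    ‖(s - 1) * ∑' k : ℕ, rpowC (a + k) (-s) - rpowC a (1 - s)‖
      ≤ ‖s - 1‖ * ‖s‖ * ∑' k : ℕ, (((k : ℝ) + 1) ^ 2)⁻¹ := by
  have htel : HasSum (fun k : ℕ => rpowC (a + k) (1 - s) - rpowC (a + k + 1) (1 - s))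
      (rpowC a (1 - s)) := by
    have hbd : Summable (fun k : ℕ => rpowC (a + k) (1 - s) - rpowC (a + k + 1) (1 - s)) := by
      have h1 : Summable (fun k : ℕ => (s - 1) * rpowC (a + k) (-s)
          - (rpowC (a + k) (1 - s) - rpowC (a + k + 1) (1 - s))) := by
        refine Summable.of_norm_bounded (summable_inv_sq.mul_left (‖s - 1‖ * ‖s‖)) (fun k => ?_)
        have hk : (0 : ℝ) ≤ k := Nat.cast_nonneg k
        refine (norm_term_sub_le hs.le (by linarith)).trans ?_
        gcongr _ * (?_ ^ 2)⁻¹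
        linarith
      simpa using ((summable_rpowC hs ha).mul_left (s - 1)).sub h1
    rw [hbd.hasSum_iff_tendsto_nat]
    have hp : ∀ n : ℕ, ∑ k ∈ Finset.range n,
        (rpowC (a + k) (1 - s) - rpowC (a + k + 1) (1 - s))
          = rpowC a (1 - s) - rpowC (a + n) (1 - s) := by
      intro n
      have := Finset.sum_range_sub' (fun k : ℕ => rpowC (a + k) (1 - s)) n
      simpa [add_assoc] using this
    simp_rw [hp]
    simpa using (tendsto_rpowC_atTop hs ha).const_sub (rpowC a (1 - s))
  have hd := ((summable_rpowC hs ha).hasSum.mul_left (s - 1)).sub htel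
  rw [← hd.tsum_eq]
  rw [← tsum_mul_left]
  refine tsum_of_norm_bounded (summable_inv_sq.mul_left (‖s - 1‖ * ‖s‖)).hasSum (fun k => ?_)
  have hk : (0 : ℝ) ≤ k := Nat.cast_nonneg k
  refine (norm_term_sub_le hs.le (by linarith)).trans ?_
  gcongr _ * (?_ ^ 2)⁻¹
  linarith

lemma hurwitzTail_tendsto {a : ℝ} (ha : 1 ≤ a) :
    Filter.Tendsto (fun s : ℂ => (s - 1) * ∑' k : ℕ, rpowC (a + k) (-s))
      (nhdsWithin 1 {z : ℂ | 1 < z.re}) (nhds 1) := by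
  have h1 : Filter.Tendsto (fun s : ℂ => rpowC a (1 - s))
      (nhdsWithin 1 {z : ℂ | 1 < z.re}) (nhds 1) := by
    have hc : Continuous (fun s : ℂ => rpowC a (1 - s)) := by
      unfold rpowC
      fun_prop
    have := (hc.tendsto 1).mono_left (nhdsWithin_le_nhds (s := {z : ℂ | 1 < z.re}))
    simpa [rpowC] using this
  have h2 : Filter.Tendsto
      (fun s : ℂ => (s - 1) * ∑' k : ℕ, rpowC (a + k) (-s) - rpowC a (1 - s))
      (nhdsWithin 1 {z : ℂ | 1 < z.re}) (nhds 0) := by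
    refine squeeze_zero_norm'
      (a := fun s : ℂ => ‖s - 1‖ * ‖s‖ * ∑' k : ℕ, (((k : ℝ) + 1) ^ 2)⁻¹) ?_ ?_
    · filter_upwards [self_mem_nhdsWithin] with s hs
      exact hurwitzTail_norm_sub_le hs ha
    · have hc : Continuous
          (fun s : ℂ => ‖s - 1‖ * ‖s‖ * ∑' k : ℕ, (((k : ℝ) + 1) ^ 2)⁻¹) := by fun_prop
      have := (hc.tendsto 1).mono_left (nhdsWithin_le_nhds (s := {z : ℂ | 1 < z.re}))
      simpa using this
  simpa using h2.add h1

lemma hurwitzTail_norm_le {s : ℂ} (hs : 1 < s.re) (hs1 : ‖s - 1‖ < 1) {a : ℝ} (ha : 1 ≤ a) :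
    ‖(s - 1) * ∑' k : ℕ, rpowC (a + k) (-s)‖ ≤ 1 + 2 * ∑' k : ℕ, (((k : ℝ) + 1) ^ 2)⁻¹ := by
  have h0 : ‖rpowC a (1 - s)‖ ≤ 1 := by
    rw [norm_rpowC_s13 (by linarith)]
    apply Real.rpow_le_one_of_one_le_of_nonpos ha
    simp
    linarith
  have hs2 : ‖s‖ ≤ 2 := by
    have := norm_add_le (s - 1) 1
    simp at this
    linarith
  have hK : 0 ≤ ∑' k : ℕ, (((k : ℝ) + 1) ^ 2)⁻¹ := tsum_nonneg fun k => by positivity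
  have h1 : ‖s - 1‖ * ‖s‖ ≤ 2 := by nlinarith [norm_nonneg s, norm_nonneg (s - 1)]
  have h2 := hurwitzTail_norm_sub_le hs ha
  have h3 := norm_add_le ((s - 1) * ∑' k : ℕ, rpowC (a + k) (-s) - rpowC a (1 - s))
    (rpowC a (1 - s))
  rw [sub_add_cancel] at h3
  have h4 := mul_le_mul_of_nonneg_right h1 hK
  linarith

/-! ### The limit -/

/-- Summation over the outermost index `n₁ = n₂ + 1 + k` first. -/
lemma multipleHurwitz_cons (r : ℕ) (al : Fin (r + 2) → ℝ) (hal : ∀ i, al i ∈ Set.Ico (0 : ℝ) 1)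
    (t : Fin (r + 1) → ℂ) (ht : t ∈ Ur (r + 1) 0) {s : ℂ} (hs : 1 < s.re) :
    multipleHurwitz al (Fin.cons s t) = ∑' n : DTuple (r + 1),
      (∑' k : ℕ, rpowC ((n.1 0 : ℝ) + 1 + al 0 + k) (-s))
        * hzTerm (fun i => al i.succ) t n.1 := by
  have hterm : ∀ p : DTuple (r + 1) × ℕ,
      hzTerm al (Fin.cons s t : Fin (r + 2) → ℂ) (DTuple.consEquiv r p).1
        = rpowC ((p.1.1 0 : ℝ) + 1 + al 0 + p.2) (-s) * hzTerm (fun i => al i.succ) t p.1.1 := by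
    intro p
    rw [DTuple.consEquiv_val, hzTerm, Fin.prod_univ_succ]
    simp only [Fin.cons_zero, Fin.cons_succ, hzTerm]
    congr 2
    push_cast
    ring
  have hsum : Summable (fun p : DTuple (r + 1) × ℕ =>
      rpowC ((p.1.1 0 : ℝ) + 1 + al 0 + p.2) (-s) * hzTerm (fun i => al i.succ) t p.1.1) := by
    refine Summable.of_norm_bounded
      ((summable_norm_hzTerm r (fun i => al i.succ) (fun i => hal i.succ) t ht).mul_of_nonneg
        (summable_nat_add_one_rpow hs) (fun n => norm_nonneg _) (fun k => by positivity))
      (fun p => ?_)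
    rw [norm_mul, mul_comm]
    gcongr
    exact norm_rpowC_add_le hs
      (by linarith [(hal 0).1, (Nat.cast_nonneg (p.1.1 0) : (0 : ℝ) ≤ _)]) _
  rw [multipleHurwitz, ← (DTuple.consEquiv r).tsum_eq]
  simp_rw [hterm]
  rw [hsum.tsum_prod]
  simp_rw [tsum_mul_right]

/-- For `r ≥ 2`, fixed `s_2,…,s_r` with `Re(s_2+⋯+s_i) > i−1` for `2 ≤ i ≤ r`,
`(s_1−1)·ζ_r(s_1,s_2,…,s_r;α_1,…,α_r)` tends to `ζ_{r−1}(s_2,…,s_r;α_2,…,α_r)`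
as `s_1 → 1` within `{Re(s_1) > 1}`. -/
theorem stmt_13 (r : ℕ) (al : Fin (r + 2) → ℝ) (hal : ∀ i, al i ∈ Set.Ico (0 : ℝ) 1)
    (t : Fin (r + 1) → ℂ) (ht : t ∈ Ur (r + 1) 0) :
    Filter.Tendsto (fun s₁ : ℂ => (s₁ - 1) * multipleHurwitz al (Fin.cons s₁ t))
      (nhdsWithin 1 {z : ℂ | 1 < z.re})
      (nhds (multipleHurwitz (fun i => al i.succ) t)) := by
  have ha : ∀ n : DTuple (r + 1), 1 ≤ (n.1 0 : ℝ) + 1 + al 0 := fun n => by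
    linarith [(hal 0).1, (Nat.cast_nonneg (n.1 0) : (0 : ℝ) ≤ _)]
  have key : Filter.Tendsto (fun s : ℂ => ∑' n : DTuple (r + 1),
      ((s - 1) * ∑' k : ℕ, rpowC ((n.1 0 : ℝ) + 1 + al 0 + k) (-s))
        * hzTerm (fun i => al i.succ) t n.1)
      (nhdsWithin 1 {z : ℂ | 1 < z.re})
      (nhds (multipleHurwitz (fun i => al i.succ) t)) := by
    refine tendsto_tsum_of_dominated_convergence
      ((summable_norm_hzTerm r (fun i => al i.succ) (fun i => hal i.succ) t ht).mul_left
        (1 + 2 * ∑' k : ℕ, (((k : ℝ) + 1) ^ 2)⁻¹)) (fun n => ?_) ?_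
    · simpa using (hurwitzTail_tendsto (ha n)).mul_const (hzTerm (fun i => al i.succ) t n.1)
    · filter_upwards [self_mem_nhdsWithin,
        nhdsWithin_le_nhds (Metric.ball_mem_nhds (1 : ℂ) one_pos)] with s hs hs1 n
      rw [norm_mul]
      gcongr
      exact hurwitzTail_norm_le hs (by simpa [dist_eq_norm] using hs1) (ha n)
  refine key.congr' ?_
  filter_upwards [self_mem_nhdsWithin] with s hs
  rw [multipleHurwitz_cons r al hal t ht hs, ← tsum_mul_left]
  simp_rw [mul_assoc]
end
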